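/- arXiv:1907.11492 — 7 statements merged into one kernel-verified Lean document; each statement's English description precedes it below -/
import Mathlib

section
/- For every E ∈ ℝ, the matrix T(E)ᵀ Jᵀ T′(E) is symmetric positive semidefinite; indeed it equals the sum over k ∈ {0,…,L−1} of the positive semidefinite matrices P_kᵀ · diag(1/t(k)², 0) · P_k, where P_k = T̂_{v(k−1)−E,t(k−1)} ⋯ T̂_{v(0)−E,t(0)} is the partial product of the first k transfer matrices (P_0 = I). -/
open Matrix

/-- The single-site transfer matrix `T̂_{v̂,t̂} = (1/t̂)·((v̂, −t̂²),(1, 0))`. -/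
noncomputable def siteTransfer (v t : ℝ) : Matrix (Fin 2) (Fin 2) ℝ :=
  (1 / t) • !![v, -t ^ 2; 1, 0]

/-- The partial products `P_k = T̂_{v(k−1)−E,t(k−1)} ⋯ T̂_{v(0)−E,t(0)}`, with `P_0 = I`. -/
noncomputable def partialTransfer (t v : ℕ → ℝ) (E : ℝ) : ℕ → Matrix (Fin 2) (Fin 2) ℝ
  | 0 => 1
  | k + 1 => siteTransfer (v k - E) (t k) * partialTransfer t v E k

/-
With `S_k = T̂_{v(k)−E,t(k)}` one has `P_{k+1} = S_k P_k` and `S_kᵀ Jᵀ S_k = det S_k • Jᵀ = Jᵀ`,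
so the Leibniz rule gives `P_{k+1}ᵀ Jᵀ P_{k+1}′ = P_kᵀ (S_kᵀ Jᵀ S_k′) P_k + P_kᵀ Jᵀ P_k′`, which
telescopes to the sum. Each summand is a congruence of `S_kᵀ Jᵀ S_k′ = diag(1/t(k)², 0)`, hence
positive semidefinite.
-/

section MatrixLemmas

variable {l m n ι 𝕜 𝔸 R : Type*}

lemma hasDerivAt_matrix_mul_apply [Fintype m] [NontriviallyNormedField 𝕜] [NormedRing 𝔸]
    [NormedAlgebra 𝕜 𝔸] {A : 𝕜 → Matrix l m 𝔸} {A' : Matrix l m 𝔸} {B : 𝕜 → Matrix m n 𝔸}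
    {B' : Matrix m n 𝔸} {x : 𝕜}
    (hA : ∀ i j, HasDerivAt (fun y => A y i j) (A' i j) x)
    (hB : ∀ i j, HasDerivAt (fun y => B y i j) (B' i j) x) (i : l) (j : n) :
    HasDerivAt (fun y => (A y * B y) i j) ((A' * B x + A x * B') i j) x := by
  simp only [Matrix.add_apply, Matrix.mul_apply, ← Finset.sum_add_distrib]
  exact HasDerivAt.fun_sum fun k _ => (hA i k).mul (hB k j)

lemma transpose_mul_mul_leibniz [Fintype l] [Fintype m] [CommSemiring R] {A : Matrix l m R}
    {K : Matrix l l R} {K' : Matrix m m R} (hA : Aᵀ * K * A = K') (A' : Matrix l m R)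
    (B B' : Matrix m n R) :
    (A * B)ᵀ * K * (A' * B + A * B') = Bᵀ * (Aᵀ * K * A') * B + Bᵀ * K' * B' := by
  rw [← hA]
  simp only [Matrix.transpose_mul, Matrix.mul_add, Matrix.mul_assoc]

lemma transpose_mul_symplectic_mul_self [CommRing R] (M : Matrix (Fin 2) (Fin 2) R) :
    Mᵀ * (!![0, -1; 1, 0] : Matrix (Fin 2) (Fin 2) R)ᵀ * M =
      M.det • (!![0, -1; 1, 0] : Matrix (Fin 2) (Fin 2) R)ᵀ := by
  ext i j
  fin_cases i <;> fin_cases j <;>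
    simp [Matrix.mul_apply, Matrix.det_fin_two, Fin.sum_univ_two] <;> ring

lemma posSemidef_sum_conjTranspose_mul_diagonal_mul [Finite m] [Fintype n] [DecidableEq n]
    [Ring R] [PartialOrder R] [StarRing R] [StarOrderedRing R] (s : Finset ι) {d : ι → n → R}
    (hd : ∀ k ∈ s, 0 ≤ d k) (P : ι → Matrix n m R) :
    (∑ k ∈ s, (P k)ᴴ * Matrix.diagonal (d k) * P k).PosSemidef :=
  Matrix.posSemidef_sum s fun k hk =>
    (Matrix.PosSemidef.diagonal (hd k hk)).conjTranspose_mul_mul_same (P k)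

end MatrixLemmas

local notation "J" => (!![0, -1; 1, 0] : Matrix (Fin 2) (Fin 2) ℝ)

/-- The entrywise derivative in `E` of `siteTransfer (v - E) t`, which depends neither on `v` nor
on `E`. -/
noncomputable def siteTransferDeriv (t : ℝ) : Matrix (Fin 2) (Fin 2) ℝ :=
  !![-(1 / t), 0; 0, 0]

/-- The entrywise derivative in `E` of the partial product `partialTransfer t v E k`, given by the
Leibniz rule for `P_{k+1} = T̂_{v(k)−E,t(k)} P_k`. -/
noncomputable def partialTransferDeriv (t v : ℕ → ℝ) (E : ℝ) : ℕ → Matrix (Fin 2) (Fin 2) ℝ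
  | 0 => 0
  | k + 1 => siteTransferDeriv (t k) * partialTransfer t v E k +
      siteTransfer (v k - E) (t k) * partialTransferDeriv t v E k

lemma hasDerivAt_siteTransfer_apply (v t E : ℝ) (i j : Fin 2) :
    HasDerivAt (fun E => siteTransfer (v - E) t i j) (siteTransferDeriv t i j) E := by
  fin_cases i <;> fin_cases j
  · simpa [siteTransfer, siteTransferDeriv] using
      ((hasDerivAt_id E).const_sub v).const_mul t⁻¹
  all_goals simpa [siteTransfer, siteTransferDeriv] using hasDerivAt_const E _

lemma hasDerivAt_partialTransfer_apply (t v : ℕ → ℝ) (E : ℝ) (k : ℕ) (i j : Fin 2) :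
    HasDerivAt (fun E => partialTransfer t v E k i j) (partialTransferDeriv t v E k i j) E := by
  induction k generalizing i j with
  | zero => exact hasDerivAt_const E _
  | succ k ih =>
    exact hasDerivAt_matrix_mul_apply (hasDerivAt_siteTransfer_apply (v k) (t k) E) ih i j

lemma det_siteTransfer (v : ℝ) {t : ℝ} (ht : t ≠ 0) : (siteTransfer v t).det = 1 := by
  rw [siteTransfer, Matrix.det_smul, Matrix.det_fin_two_of, Fintype.card_fin]
  field_simp
  ring

lemma siteTransfer_transpose_mul_J_mul_self (v : ℝ) {t : ℝ} (ht : t ≠ 0) :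
    (siteTransfer v t)ᵀ * Jᵀ * siteTransfer v t = Jᵀ := by
  rw [transpose_mul_symplectic_mul_self, det_siteTransfer v ht, one_smul]

lemma siteTransfer_transpose_mul_J_mul_deriv (v t : ℝ) :
    (siteTransfer v t)ᵀ * Jᵀ * siteTransferDeriv t = Matrix.diagonal ![1 / t ^ 2, 0] := by
  ext i j
  fin_cases i <;> fin_cases j <;>
    simp [siteTransfer, siteTransferDeriv, Matrix.mul_apply, Fin.sum_univ_two, sq]

lemma partialTransfer_transpose_mul_J_mul_deriv_eq_sum {L : ℕ} {t : ℕ → ℝ}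
    (ht : ∀ k < L, t k ≠ 0) (v : ℕ → ℝ) (E : ℝ) :
    (partialTransfer t v E L)ᵀ * Jᵀ * partialTransferDeriv t v E L =
      ∑ k ∈ Finset.range L,
        (partialTransfer t v E k)ᵀ * Matrix.diagonal ![1 / t k ^ 2, 0] *
          partialTransfer t v E k := by
  induction L with
  | zero => simp only [partialTransferDeriv, Matrix.mul_zero, Finset.range_zero, Finset.sum_empty]
  | succ L ih =>
    have hS := siteTransfer_transpose_mul_J_mul_self (v L - E) (ht L L.lt_succ_self)
    rw [partialTransfer, partialTransferDeriv, transpose_mul_mul_leibniz hS,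
      siteTransfer_transpose_mul_J_mul_deriv, ih fun k hk => ht k (hk.trans L.lt_succ_self),
      Finset.sum_range_succ, add_comm]

theorem transfer_matrix_energy_derivative_posSemidef_general
    {L : ℕ} {t : ℕ → ℝ} (v : ℕ → ℝ) (ht : ∀ k < L, t k ≠ 0)
    {T' : Matrix (Fin 2) (Fin 2) ℝ} {E : ℝ}
    (hT' : ∀ i j : Fin 2, HasDerivAt (fun E : ℝ => partialTransfer t v E L i j) (T' i j) E) :
    (partialTransfer t v E L)ᵀ * Jᵀ * T' =
      ∑ k ∈ Finset.range L,
        (partialTransfer t v E k)ᵀ * Matrix.diagonal ![1 / t k ^ 2, 0] *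
          partialTransfer t v E k ∧
    ((partialTransfer t v E L)ᵀ * Jᵀ * T').PosSemidef := by
  have hT'_eq : T' = partialTransferDeriv t v E L := by
    ext i j
    exact (hT' i j).unique (hasDerivAt_partialTransfer_apply t v E L i j)
  have hdiag : ∀ k ∈ Finset.range L, 0 ≤ ![1 / t k ^ 2, 0] := fun k _ =>
    Fin.forall_fin_two.2 ⟨one_div_nonneg.2 (sq_nonneg (t k)), le_rfl⟩
  rw [hT'_eq, partialTransfer_transpose_mul_J_mul_deriv_eq_sum ht]
  refine ⟨rfl, ?_⟩
  simpa only [Matrix.conjTranspose_eq_transpose_of_trivial] using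
    posSemidef_sum_conjTranspose_mul_diagonal_mul _ hdiag (partialTransfer t v E)

/-- For every `E`, the matrix `T(E)ᵀ Jᵀ T′(E)` equals the sum over `k < L` of the
positive semidefinite matrices `P_kᵀ · diag(1/t(k)², 0) · P_k`, and is in particular symmetric
positive semidefinite. Here `T(E) = P_L` and `T′(E)` is the entrywise derivative in `E`. -/
theorem transfer_matrix_energy_derivative_posSemidef
    (L : ℕ) (t v : ℕ → ℝ) (ht : ∀ k < L, 0 < t k)
    (T' : ℝ → Matrix (Fin 2) (Fin 2) ℝ)
    (hT' : ∀ (i j : Fin 2) (E : ℝ),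
      HasDerivAt (fun E : ℝ => partialTransfer t v E L i j) (T' E i j) E)
    (E : ℝ) :
    (partialTransfer t v E L)ᵀ * (!![0, -1; 1, 0] : Matrix (Fin 2) (Fin 2) ℝ)ᵀ * T' E =
      ∑ k ∈ Finset.range L,
        (partialTransfer t v E k)ᵀ * Matrix.diagonal ![1 / t k ^ 2, 0] *
          partialTransfer t v E k ∧
    ((partialTransfer t v E L)ᵀ * (!![0, -1; 1, 0] : Matrix (Fin 2) (Fin 2) ℝ)ᵀ *
      T' E).PosSemidef :=
  transfer_matrix_energy_derivative_posSemidef_general v (fun k hk => (ht k hk).ne')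
    fun i j => hT' i j E
end

section
/- There exists ε₀ ∈ (0,1), depending only on k, C1, C2, C3, such that for all ε ∈ (0, ε₀], all parameters a, b, α, β, γ, δ satisfying the stated bounds, and all x ∈ ℝ with Kε ≤ x ≤ (Kε)⁻¹, one has Q_ε·x ≤ k·x; consequently, for any κ > 0, κ²·(Q_ε·x) ≤ k·κ²·x. -/
/-- The Möbius map `Q_ε·x` of the perturbative Prüfer phase dynamics. -/
noncomputable def Qmob (ε a b α β γ δ x : ℝ) : ℝ :=
  ((1 + ε ^ 2 * α) * x + (a - b - ε * β) * ε) /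
    (1 + ε ^ 2 * δ - (a + b + ε * γ) * ε * x)

/-!
If `K * ε ≤ x ≤ (K * ε)⁻¹`, then `ε / x` and `ε * x` are both at most `1 / K`. With
`t = ε ^ 2 * C3 + (C2 + ε * C3) / K`, the numerator of `Q_ε·x` is therefore at most
`(1 + t) * x` and its denominator at least `1 - t`, so `Q_ε·x ≤ (1 + t) / (1 - t) * x`, and
`(1 + t) / (1 - t) ≤ k` as soon as `t ≤ (k - 1) / (k + 1)`. As `ε → 0`, `t` tends to `C2 / K`; for
`K = 2 * C2 * (1 - k⁻¹)⁻¹` this limit is `(k - 1) / (2 * k)`, strictly below the threshold.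
-/

open Filter Topology

section MobiusBound

variable {𝕜 : Type*} [Field 𝕜] [LinearOrder 𝕜] [IsStrictOrderedRing 𝕜]
  {k K c r s u v w x z ε : 𝕜}

lemma mul_le_div_mul_of_mul_le (hK : 0 < K) (hc : 0 ≤ c) (hv : v ≤ c) (hr : 0 ≤ r)
    (hrx : K * r ≤ x) : v * r ≤ c / K * x :=
  calc
    v * r ≤ c * r := by gcongr
    _ = c / K * (K * r) := by field_simp
    _ ≤ c / K * x := by gcongr

lemma one_add_le_mul_one_sub_iff (hk : 0 < k + 1) :
    1 + s ≤ k * (1 - s) ↔ s ≤ (k - 1) / (k + 1) := by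
  rw [le_div_iff₀ hk]
  constructor <;> intro h <;> linarith

lemma perturbed_mobius_le_mul (hk : 0 ≤ k) (hK : 0 < K) (hc : 0 ≤ c) (hε : 0 ≤ ε)
    (hu : u ≤ s) (hv : v ≤ c) (hw : -s ≤ w) (hz : z ≤ c)
    (hs : s + c / K ≤ (k - 1) / (k + 1)) (hεx : K * ε ≤ x) (hxε : K * (ε * x) ≤ 1) :
    ((1 + u) * x + v * ε) / (1 + w - z * ε * x) ≤ k * x := by
  set t := s + c / K
  have hx : 0 ≤ x := (mul_nonneg hK.le hε).trans hεx
  have num_le : (1 + u) * x + v * ε ≤ (1 + t) * x := by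
    have hvε : v * ε ≤ c / K * x := mul_le_div_mul_of_mul_le hK hc hv hε hεx
    have hux : u * x ≤ s * x := by gcongr
    linarith
  have le_den : 1 - t ≤ 1 + w - z * ε * x := by
    have hzεx : z * (ε * x) ≤ c / K * 1 :=
      mul_le_div_mul_of_mul_le hK hc hz (mul_nonneg hε hx) hxε
    linarith
  have ht_lt : t < 1 := hs.trans_lt ((div_lt_one (by linarith)).2 (by linarith))
  have expansion_le : 1 + t ≤ k * (1 - t) := (one_add_le_mul_one_sub_iff (by linarith)).2 hs
  rw [div_le_iff₀ (by linarith)]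
  calc
    (1 + u) * x + v * ε ≤ (1 + t) * x := num_le
    _ ≤ k * (1 - t) * x := by gcongr
    _ = k * x * (1 - t) := by ring
    _ ≤ k * x * (1 + w - z * ε * x) := by gcongr

end MobiusBound

lemma exists_mem_Ioo_forall_mem_Ioc_of_eventually_nhdsGT {X : Type*} [LinearOrder X]
    [TopologicalSpace X] [OrderTopology X] [DenselyOrdered X] {p : X → Prop} {a b : X}
    (hab : a < b) (h : ∀ᶠ x in 𝓝[>] a, p x) : ∃ u ∈ Set.Ioo a b, ∀ x ∈ Set.Ioc a u, p x := by
  obtain ⟨u', hu', hsub⟩ := (mem_nhdsGT_iff_exists_mem_Ioc_Ioo_subset hab).1 h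
  obtain ⟨u, hau, huu'⟩ := exists_between hu'.1
  exact ⟨u, ⟨hau, huu'.trans_le hu'.2⟩, fun x hx => hsub ⟨hx.1, hx.2.trans_lt huu'⟩⟩

section Qmob

variable {k K C2 C3 a b α β γ δ x ε : ℝ}

lemma Qmob_le_mul (hk : 0 ≤ k) (hK : 0 < K) (hε : 0 < ε) (hC : 0 ≤ C2 + ε * C3)
    (hab : a + |b| ≤ C2) (hα : α ≤ C3) (hβ : -C3 ≤ β) (hγ : γ ≤ C3) (hδ : -C3 ≤ δ)
    (hs : ε ^ 2 * C3 + (C2 + ε * C3) / K ≤ (k - 1) / (k + 1))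
    (hεx : K * ε ≤ x) (hxε : x ≤ (K * ε)⁻¹) : Qmob ε a b α β γ δ x ≤ k * x := by
  have hsub : a - b ≤ C2 := by linarith [neg_abs_le b]
  have hadd : a + b ≤ C2 := by linarith [le_abs_self b]
  have hεβ : ε * -C3 ≤ ε * β := by gcongr
  have hεγ : ε * γ ≤ ε * C3 := by gcongr
  have hεδ : ε ^ 2 * -C3 ≤ ε ^ 2 * δ := by gcongr
  have hKεx : K * (ε * x) ≤ 1 := by
    rw [← mul_assoc]
    exact (le_inv_mul_iff₀ (mul_pos hK hε)).1 (by rwa [mul_one])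
  exact perturbed_mobius_le_mul hk hK hC hε.le (by gcongr) (by linarith) (by linarith)
    (by linarith) hs hεx hKεx

lemma eventually_perturbation_lt {τ : ℝ} (h : C2 / K < τ) :
    ∀ᶠ ε in 𝓝 (0 : ℝ), ε ^ 2 * C3 + (C2 + ε * C3) / K < τ := by
  have hcont : Continuous fun ε : ℝ => ε ^ 2 * C3 + (C2 + ε * C3) / K := by fun_prop
  exact hcont.continuousAt.eventually_lt_const (by simpa using h)

lemma div_two_mul_mul_inv_one_sub_inv_lt (hk : 1 < k) (hC2 : C2 ≠ 0) :
    C2 / (2 * C2 * (1 - k⁻¹)⁻¹) < (k - 1) / (k + 1) := by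
  have : 0 < k := one_pos.trans hk
  calc
    C2 / (2 * C2 * (1 - k⁻¹)⁻¹) = (k - 1) / (2 * k) := by field_simp
    _ < (k - 1) / (k + 1) := div_lt_div_of_pos_left (by linarith) (by linarith) (by linarith)

end Qmob

theorem mobius_contraction_region_III_general {k K C2 C3 : ℝ} (hk : 0 ≤ k) (hK : 0 < K)
    (hC2 : 0 < C2) (hC2K : C2 / K < (k - 1) / (k + 1)) :
    ∃ ε₀ ∈ Set.Ioo (0 : ℝ) 1, ∀ ε ∈ Set.Ioc (0 : ℝ) ε₀, ∀ a b α β γ δ : ℝ,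
      a + |b| ≤ C2 → α ≤ C3 → -C3 ≤ β → γ ≤ C3 → -C3 ≤ δ →
      ∀ x : ℝ, K * ε ≤ x → x ≤ (K * ε)⁻¹ →
        Qmob ε a b α β γ δ x ≤ k * x ∧
        ∀ κ : ℝ, κ ^ 2 * Qmob ε a b α β γ δ x ≤ k * κ ^ 2 * x := by
  have hC : ∀ᶠ ε in 𝓝 (0 : ℝ), 0 < C2 + ε * C3 := by
    have hcont : Continuous fun ε : ℝ => C2 + ε * C3 := by fun_prop
    exact hcont.continuousAt.eventually_const_lt (by simpa using hC2)
  obtain ⟨ε₀, hε₀, hsmall⟩ := exists_mem_Ioo_forall_mem_Ioc_of_eventually_nhdsGT one_pos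
    ((hC.and (eventually_perturbation_lt (C3 := C3) hC2K)).filter_mono inf_le_left)
  refine ⟨ε₀, hε₀, fun ε hε a b α β γ δ hab hα hβ hγ hδ x hεx hxε => ?_⟩
  obtain ⟨hCε, hs⟩ := hsmall ε hε
  have hQ : Qmob ε a b α β γ δ x ≤ k * x :=
    Qmob_le_mul hk hK hε.1 hCε.le hab hα hβ hγ hδ hs.le hεx hxε
  refine ⟨hQ, fun κ => ?_⟩
  calc
    κ ^ 2 * Qmob ε a b α β γ δ x ≤ κ ^ 2 * (k * x) := by gcongr
    _ = k * κ ^ 2 * x := by ring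

/-- There is `ε₀ ∈ (0,1)` depending only on `k, C1, C2, C3` such that for all
`ε ∈ (0,ε₀]`, all admissible parameters and all `x` with `Kε ≤ x ≤ (Kε)⁻¹`, one has
`Q_ε·x ≤ k·x`, and consequently `κ²·(Q_ε·x) ≤ k·κ²·x` for all `κ > 0`.
Here `K = 2C2(1−k⁻¹)⁻¹`. -/
theorem mobius_contraction_region_III (k C1 C2 C3 : ℝ)
    (hk : 1 < k) (hC1 : 0 < C1) (hC12 : C1 ≤ C2) :
    ∃ ε₀ : ℝ, ε₀ ∈ Set.Ioo (0 : ℝ) 1 ∧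
      ∀ ε ∈ Set.Ioc (0 : ℝ) ε₀, ∀ a b α β γ δ : ℝ,
        C1 ≤ a - |b| → a + |b| ≤ C2 →
        |α| ≤ C3 → |β| ≤ C3 → |γ| ≤ C3 → |δ| ≤ C3 →
        ∀ x : ℝ, 2 * C2 * (1 - k⁻¹)⁻¹ * ε ≤ x → x ≤ (2 * C2 * (1 - k⁻¹)⁻¹ * ε)⁻¹ →
          Qmob ε a b α β γ δ x ≤ k * x ∧
          ∀ κ : ℝ, 0 < κ → κ ^ 2 * Qmob ε a b α β γ δ x ≤ k * κ ^ 2 * x := by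
  have hC2 : 0 < C2 := hC1.trans_le hC12
  have hK : 0 < 2 * C2 * (1 - k⁻¹)⁻¹ :=
    mul_pos (by positivity) (inv_pos.2 (sub_pos.2 (inv_lt_one_of_one_lt₀ hk)))
  obtain ⟨ε₀, hε₀, h⟩ := mobius_contraction_region_III_general (C3 := C3) (by linarith) hK hC2
    (div_two_mul_mul_inv_one_sub_inv_lt hk hC2.ne')
  exact ⟨ε₀, hε₀, fun ε hε a b α β γ δ _ hab hα hβ hγ hδ x hεx hxε =>
    (h ε hε a b α β γ δ hab (le_of_abs_le hα) (neg_le_of_abs_le hβ) (le_of_abs_le hγ)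
      (neg_le_of_abs_le hδ) x hεx hxε).imp_right fun hκQ κ _ => hκQ κ⟩
end

section
/- There exists ε₀ ∈ (0,1), depending only on k, C1, C2, C3, such that for all ε ∈ (0, ε₀], all parameters a, b, α, β, γ, δ satisfying the stated bounds, and all κ > 0: if x > 0 and Q_ε·(κ²x) ≤ 0 then κ²x > (Kε)⁻¹. Equivalently, for every y with 0 < y ≤ (Kε)⁻¹ one has Q_ε·y > 0. -/
/-!
As `y ≤ (Kε)⁻¹` means `Kεy ≤ 1`, the denominator of `Q_ε·y` is at least
`1 - ε²C3 - (C2 + εC3) / K`, while its numerator is at least `(1 - ε²C3)y + (C1 - εC3)ε`.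
At `ε = 0` the positivity of both reduces to `0 < 1`, `0 < C1` and `C2 < K`, and these strict
inequalities persist for small `ε` by continuity.
-/

open Set Filter Topology

theorem mul_le_one_of_le_inv₀ {G : Type*} [GroupWithZero G] [PartialOrder G] [PosMulReflectLT G]
    {c y : G} (hy : 0 < y) (h : y ≤ c⁻¹) : c * y ≤ 1 :=
  (le_inv_mul_iff₀ (inv_pos.1 (hy.trans_le h))).1 (by simpa using h)

theorem one_lt_inv_one_sub_inv {F : Type*} [Field F] [LinearOrder F] [IsStrictOrderedRing F] {k : F}
    (hk : 1 < k) : 1 < (1 - k⁻¹)⁻¹ :=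
  (one_lt_inv₀ (sub_pos.2 (inv_lt_one_of_one_lt₀ hk))).2
    (sub_lt_self 1 (inv_pos.2 (zero_lt_one.trans hk)))

section Pointwise

variable {ε a b α β γ δ C1 C2 C3 K y : ℝ}

theorem Qmob_numerator_pos (hε : 0 < ε) (hy : 0 ≤ y) (hab : C1 ≤ a - b) (hα : |α| ≤ C3)
    (hβ : |β| ≤ C3) (h_one : ε ^ 2 * C3 ≤ 1) (hC1 : ε * C3 < C1) :
    0 < (1 + ε ^ 2 * α) * y + (a - b - ε * β) * ε := by
  have h_slope : 0 ≤ 1 + ε ^ 2 * α := by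
    have : ε ^ 2 * -C3 ≤ ε ^ 2 * α := by gcongr; exact neg_le_of_abs_le hα
    linarith
  have h_const : 0 < a - b - ε * β := by
    have : ε * β ≤ ε * C3 := by gcongr; exact le_of_abs_le hβ
    linarith
  positivity

theorem Qmob_denominator_pos (hε : 0 < ε) (hy : 0 < y) (hyK : K * ε * y ≤ 1) (hab : a + b ≤ C2)
    (hγ : |γ| ≤ C3) (hδ : |δ| ≤ C3) (h_one : ε ^ 2 * C3 ≤ 1)
    (hK : C2 + ε * C3 < K * (1 - ε ^ 2 * C3)) :
    0 < 1 + ε ^ 2 * δ - (a + b + ε * γ) * ε * y := by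
  refine sub_pos.2 ?_
  calc
    (a + b + ε * γ) * ε * y ≤ (C2 + ε * C3) * ε * y := by
      gcongr
      exact le_of_abs_le hγ
    _ < K * (1 - ε ^ 2 * C3) * ε * y := by gcongr
    _ = K * ε * y * (1 - ε ^ 2 * C3) := by ring
    _ ≤ 1 - ε ^ 2 * C3 := mul_le_of_le_one_left (sub_nonneg.2 h_one) hyK
    _ = 1 + ε ^ 2 * -C3 := by ring
    _ ≤ 1 + ε ^ 2 * δ := by
      gcongr
      exact neg_le_of_abs_le hδ

end Pointwise

theorem eventually_Qmob_pos {C1 C2 K : ℝ} (C3 : ℝ) (hC1 : 0 < C1) (hK : C2 < K) :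
    ∀ᶠ ε in 𝓝[>] (0 : ℝ), ∀ a b α β γ δ : ℝ, C1 ≤ a - b → a + b ≤ C2 →
      |α| ≤ C3 → |β| ≤ C3 → |γ| ≤ C3 → |δ| ≤ C3 →
      ∀ y : ℝ, 0 < y → y ≤ (K * ε)⁻¹ → 0 < Qmob ε a b α β γ δ y := by
  have h_one : ∀ᶠ ε in 𝓝 (0 : ℝ), ε ^ 2 * C3 < 1 :=
    ContinuousAt.eventually_lt (by fun_prop) continuousAt_const (by simp)
  have h_num : ∀ᶠ ε in 𝓝 (0 : ℝ), ε * C3 < C1 :=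
    ContinuousAt.eventually_lt (by fun_prop) continuousAt_const (by simpa using hC1)
  have h_den : ∀ᶠ ε in 𝓝 (0 : ℝ), C2 + ε * C3 < K * (1 - ε ^ 2 * C3) :=
    ContinuousAt.eventually_lt (by fun_prop) (by fun_prop) (by simpa using hK)
  filter_upwards [self_mem_nhdsWithin, h_one.filter_mono nhdsWithin_le_nhds,
    h_num.filter_mono nhdsWithin_le_nhds, h_den.filter_mono nhdsWithin_le_nhds]
    with ε hε h_one h_num h_den a b α β γ δ h_sub h_add hα hβ hγ hδ y hy hyK
  exact div_pos (Qmob_numerator_pos hε hy.le h_sub hα hβ h_one.le h_num)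
    (Qmob_denominator_pos hε hy (mul_le_one_of_le_inv₀ hy hyK) h_add hγ hδ h_one.le h_den)

theorem region_I_entered_only_through_region_IV_general (K C1 C2 C3 : ℝ)
    (hC1 : 0 < C1) (hK : C2 < K) :
    ∃ ε₀ : ℝ, ε₀ ∈ Set.Ioo (0 : ℝ) 1 ∧
      ∀ ε ∈ Set.Ioc (0 : ℝ) ε₀, ∀ a b α β γ δ : ℝ,
        C1 ≤ a - |b| → a + |b| ≤ C2 →
        |α| ≤ C3 → |β| ≤ C3 → |γ| ≤ C3 → |δ| ≤ C3 →
        (∀ κ x : ℝ, 0 < κ → 0 < x → Qmob ε a b α β γ δ (κ ^ 2 * x) ≤ 0 →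
          (K * ε)⁻¹ < κ ^ 2 * x) ∧
        (∀ y : ℝ, 0 < y → y ≤ (K * ε)⁻¹ → 0 < Qmob ε a b α β γ δ y) := by
  obtain ⟨ε₀, hε₀, h_pos⟩ := mem_nhdsGT_iff_exists_Ioc_subset.1
    ((eventually_Qmob_pos C3 hC1 hK).and (Ioo_mem_nhdsGT (zero_lt_one' ℝ)))
  refine ⟨ε₀, (h_pos ⟨hε₀, le_rfl⟩).2, fun ε hε a b α β γ δ h_sub h_add hα hβ hγ hδ ↦ ?_⟩
  have h_Qpos := (h_pos hε).1 a b α β γ δ (by linarith [le_abs_self b])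
    (by linarith [le_abs_self b]) hα hβ hγ hδ
  exact ⟨fun κ x hκ hx hQ ↦ not_le.1 fun h_le ↦ (h_Qpos _ (by positivity) h_le).not_ge hQ, h_Qpos⟩

/-- There is `ε₀ ∈ (0,1)` depending only on `k, C1, C2, C3` such that for all
`ε ∈ (0,ε₀]` and all admissible parameters: if `x > 0` and `Q_ε·(κ²x) ≤ 0` then
`κ²x > (Kε)⁻¹`; equivalently, `Q_ε·y > 0` for every `y` with `0 < y ≤ (Kε)⁻¹`.
Here `K = 2C2(1−k⁻¹)⁻¹`. -/
theorem region_I_entered_only_through_region_IV (k C1 C2 C3 : ℝ)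
    (hk : 1 < k) (hC1 : 0 < C1) (hC12 : C1 ≤ C2) :
    ∃ ε₀ : ℝ, ε₀ ∈ Set.Ioo (0 : ℝ) 1 ∧
      ∀ ε ∈ Set.Ioc (0 : ℝ) ε₀, ∀ a b α β γ δ : ℝ,
        C1 ≤ a - |b| → a + |b| ≤ C2 →
        |α| ≤ C3 → |β| ≤ C3 → |γ| ≤ C3 → |δ| ≤ C3 →
        (∀ κ x : ℝ, 0 < κ → 0 < x → Qmob ε a b α β γ δ (κ ^ 2 * x) ≤ 0 →
          (2 * C2 * (1 - k⁻¹)⁻¹ * ε)⁻¹ < κ ^ 2 * x) ∧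
        (∀ y : ℝ, 0 < y → y ≤ (2 * C2 * (1 - k⁻¹)⁻¹ * ε)⁻¹ →
          0 < Qmob ε a b α β γ δ y) := by
  have hC2 : 0 < C2 := hC1.trans_le hC12
  have hK : C2 < 2 * C2 * (1 - k⁻¹)⁻¹ := calc
    C2 < 2 * C2 := by linarith
    _ < 2 * C2 * (1 - k⁻¹)⁻¹ :=
      lt_mul_of_one_lt_right (by positivity) (one_lt_inv_one_sub_inv hk)
  exact region_I_entered_only_through_region_IV_general _ C1 C2 C3 hC1 hK
end

section
/- There exists ε₀ ∈ (0,1), depending only on k, C1, C2, C3, such that for all ε ∈ (0, ε₀], all parameters a, b, α, β, γ, δ satisfying the stated bounds, and all x ≤ 0, one has Q_ε·x < Kε. -/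
/-!
For small `ε`, moving `x` from `0` to the left decreases the numerator of `Q_ε·x` and increases
its positive denominator, so every nonnegative strict upper bound for `Q_ε·0` also bounds `Q_ε·x`.
Since `Q_ε·0 / ε` is at most `a - b ≤ C2` up to an error `O(ε)`, uniformly in the parameters, any
constant `K > C2` works.
-/

open Filter Set Topology

lemma mobius_lt_of_nonpos {𝕜 : Type*} [Field 𝕜] [LinearOrder 𝕜] [IsStrictOrderedRing 𝕜]
    {p q r s x c : 𝕜} (hp : 0 ≤ p) (hs : 0 ≤ s) (hr : 0 < r) (hc : 0 ≤ c) (hx : x ≤ 0)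
    (hzero : q / r < c) : (p * x + q) / (r - s * x) < c := by
  have hsx : s * x ≤ 0 := mul_nonpos_of_nonneg_of_nonpos hs hx
  rw [div_lt_iff₀ (by linarith)]
  calc
    p * x + q ≤ q := add_le_of_nonpos_left (mul_nonpos_of_nonneg_of_nonpos hp hx)
    _ < c * r := (div_lt_iff₀ hr).mp hzero
    _ ≤ c * (r - s * x) := by gcongr; linarith

lemma Qmob_lt_mul_of_nonpos {C1 C2 C3 K ε a b α β γ δ x : ℝ} (hK : 0 ≤ K) (hε : 0 < ε)
    (hε1 : ε * C3 ≤ C1) (hε2 : ε ^ 2 * C3 < 1) (hεK : C2 + ε * C3 < K * (1 - ε ^ 2 * C3))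
    (hadd : C1 ≤ a + b) (hsub : a - b ≤ C2)
    (hα : -C3 ≤ α) (hβ : -C3 ≤ β) (hγ : -C3 ≤ γ) (hδ : -C3 ≤ δ) (hx : x ≤ 0) :
    Qmob ε a b α β γ δ x < K * ε := by
  have first_order {t : ℝ} (ht : -C3 ≤ t) : -(ε * C3) ≤ ε * t := by
    rw [← mul_neg]; gcongr
  have second_order {t : ℝ} (ht : -C3 ≤ t) : -(ε ^ 2 * C3) ≤ ε ^ 2 * t := by
    rw [← mul_neg]; gcongr
  have hδ' := second_order hδ
  have hp : 0 ≤ 1 + ε ^ 2 * α := by linarith [second_order hα]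
  have hs : 0 ≤ (a + b + ε * γ) * ε := mul_nonneg (by linarith [first_order hγ]) hε.le
  have hr : 0 < 1 + ε ^ 2 * δ := by linarith
  have hzero : (a - b - ε * β) * ε / (1 + ε ^ 2 * δ) < K * ε := by
    rw [div_lt_iff₀ hr, mul_right_comm]
    gcongr
    calc
      a - b - ε * β ≤ C2 + ε * C3 := by linarith [first_order hβ]
      _ < K * (1 - ε ^ 2 * C3) := hεK
      _ ≤ K * (1 + ε ^ 2 * δ) := by gcongr; linarith
  exact mobius_lt_of_nonpos hp hs hr (mul_nonneg hK hε.le) hx hzero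

lemma eventually_nhds_zero_error_bounds {C1 C2 K : ℝ} (C3 : ℝ) (hC1 : 0 < C1) (hC2K : C2 < K) :
    ∀ᶠ ε in 𝓝 (0 : ℝ), ε * C3 < C1 ∧ ε ^ 2 * C3 < 1 ∧
      C2 + ε * C3 < K * (1 - ε ^ 2 * C3) := by
  refine .and ?_ (.and ?_ ?_) <;>
    exact ContinuousAt.eventually_lt (by fun_prop) (by fun_prop) (by simp [hC1, hC2K])

theorem exit_from_region_I_lands_in_region_II_general (C1 C2 C3 K : ℝ)
    (hC1 : 0 < C1) (hK : 0 ≤ K) (hC2K : C2 < K) :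
    ∃ ε₀ ∈ Ioo (0 : ℝ) 1, ∀ ε ∈ Ioc 0 ε₀, ∀ a b α β γ δ : ℝ,
      C1 ≤ a + b → a - b ≤ C2 → -C3 ≤ α → -C3 ≤ β → -C3 ≤ γ → -C3 ≤ δ →
      ∀ x ≤ 0, Qmob ε a b α β γ δ x < K * ε := by
  obtain ⟨r, hr, hball⟩ :=
    Metric.eventually_nhds_iff.mp (eventually_nhds_zero_error_bounds C3 hC1 hC2K)
  obtain ⟨ε₀, hε₀, hlt⟩ := exists_between (lt_min hr one_pos)
  obtain ⟨hε₀r, hε₀1⟩ := lt_min_iff.mp hlt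
  refine ⟨ε₀, ⟨hε₀, hε₀1⟩, fun ε hε a b α β γ δ hadd hsub hα hβ hγ hδ x hx => ?_⟩
  have hdist : dist ε 0 < r := by
    rw [Real.dist_0_eq_abs, abs_of_pos hε.1]
    exact hε.2.trans_lt hε₀r
  obtain ⟨hε1, hε2, hεK⟩ := hball hdist
  exact Qmob_lt_mul_of_nonpos hK hε.1 hε1.le hε2 hεK hadd hsub hα hβ hγ hδ hx

lemma lt_two_mul_mul_inv_one_sub_inv {𝕜 : Type*} [Field 𝕜] [LinearOrder 𝕜]
    [IsStrictOrderedRing 𝕜] {k C : 𝕜} (hk : 1 < k) (hC : 0 < C) :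
    C < 2 * C * (1 - k⁻¹)⁻¹ := by
  have hinv : 1 < (1 - k⁻¹)⁻¹ :=
    (one_lt_inv₀ (sub_pos.mpr (inv_lt_one_of_one_lt₀ hk))).mpr
      (sub_lt_self 1 (inv_pos.mpr (one_pos.trans hk)))
  calc
    C < 2 * C := lt_two_mul_self hC
    _ < 2 * C * (1 - k⁻¹)⁻¹ := lt_mul_of_one_lt_right (by positivity) hinv

/-- There is `ε₀ ∈ (0,1)` depending only on `k, C1, C2, C3` such that for all
`ε ∈ (0,ε₀]`, all admissible parameters and all `x ≤ 0`, one has `Q_ε·x < Kε`,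
where `K = 2C2(1−k⁻¹)⁻¹`. -/
theorem exit_from_region_I_lands_in_region_II (k C1 C2 C3 : ℝ)
    (hk : 1 < k) (hC1 : 0 < C1) (hC12 : C1 ≤ C2) :
    ∃ ε₀ : ℝ, ε₀ ∈ Set.Ioo (0 : ℝ) 1 ∧
      ∀ ε ∈ Set.Ioc (0 : ℝ) ε₀, ∀ a b α β γ δ : ℝ,
        C1 ≤ a - |b| → a + |b| ≤ C2 →
        |α| ≤ C3 → |β| ≤ C3 → |γ| ≤ C3 → |δ| ≤ C3 →
        ∀ x : ℝ, x ≤ 0 →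
          Qmob ε a b α β γ δ x < 2 * C2 * (1 - k⁻¹)⁻¹ * ε := by
  have hC2 : 0 < C2 := hC1.trans_le hC12
  have hK := lt_two_mul_mul_inv_one_sub_inv hk hC2
  obtain ⟨ε₀, hε₀, h⟩ :=
    exit_from_region_I_lands_in_region_II_general C1 C2 C3 _ hC1 (hC2.trans hK).le hK
  exact ⟨ε₀, hε₀, fun ε hε a b α β γ δ hlower hupper hα hβ hγ hδ =>
    h ε hε a b α β γ δ (by linarith [neg_abs_le b]) (by linarith [neg_abs_le b])
      (neg_le_of_abs_le hα) (neg_le_of_abs_le hβ) (neg_le_of_abs_le hγ) (neg_le_of_abs_le hδ)⟩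
end

section
/- Let κ be a positive random variable whose distribution has compact support in (0,∞), with P(κ ≠ 1) > 0, and let ν > 0 satisfy E[κ^ν] = 1 (so that E[log κ] < 0). Then for every k with 1 < k < exp(−2·E[log κ]) there exists a unique ϱ_k ∈ (0, ν/2) such that E[(k κ²)^{ϱ_k}] = 1. -/
/-!
For positive `Y` with `log Y` integrable, `t ↦ E[Y ^ t]` is the moment generating function of
`log Y`. It is convex, equals `1` at `0`, and has right derivative `E[log Y]` there: the difference
quotients of `t ↦ exp (t * x)` at `0` increase in `t`, so on `(0, b]` they are dominated by those at
the two ends. If `E[log Y] < 0` and `E[Y ^ b] > 1`, the function dips below `1` and rises above it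
again before `b`; by convexity it crosses `1` exactly once. Apply this to `Y = k κ ^ 2` and
`b = ν / 2`, where `E[log Y] = log k + 2 E[log κ]` and `E[Y ^ b] = k ^ (ν / 2) E[κ ^ ν]`.
-/

open MeasureTheory

open ProbabilityTheory Set Filter Topology

theorem existsUnique_mem_Ioo_eq_of_convexOn {f : ℝ → ℝ} {a b s y : ℝ}
    (hf : ConvexOn ℝ (Icc a b) f) (hcont : ContinuousOn f (Icc a b)) (hs : s ∈ Ioo a b)
    (hya : f a ≤ y) (hys : f s < y) (hyb : y < f b) :
    ∃! t, t ∈ Ioo a b ∧ f t = y := by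
  have ha : a ∈ Icc a b := left_mem_Icc.2 (hs.1.trans hs.2).le
  have hs' : s ∈ Icc a b := Ioo_subset_Icc_self hs
  have lt_of_eq : ∀ {t}, t ∈ Ioo a b → f t = y → s < t := fun {t} ht hty => by
    by_contra! hts
    rcases hts.eq_or_lt with rfl | hts
    · exact hys.ne hty
    · have hlt : f t < f a :=
        hf.lt_left_of_right_lt ha hs' (Ioo_subset_openSegment ⟨ht.1, hts⟩) (hty ▸ hys)
      exact (hlt.trans_le hya).ne hty
  obtain ⟨r, hr, hry⟩ : y ∈ f '' Ioo s b :=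
    intermediate_value_Ioo hs.2.le (hcont.mono (Icc_subset_Icc_left hs.1.le)) ⟨hys, hyb⟩
  have hr' : r ∈ Ioo a b := ⟨hs.1.trans hr.1, hr.2⟩
  refine ⟨r, ⟨hr', hry⟩, fun t ⟨ht, hty⟩ => ?_⟩
  have hmin : f (min r t) = y := by rcases min_choice r t with h | h <;> rw [h] <;> assumption
  have hmono : StrictMonoOn f (Icc a b ∩ Ici (min r t)) :=
    hf.strictMonoOn hs' (lt_min hr.1 (lt_of_eq ht hty)) (hys.trans_eq hmin.symm)
  exact hmono.injOn ⟨Ioo_subset_Icc_self ht, min_le_right r t⟩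
    ⟨Ioo_subset_Icc_self hr', min_le_left r t⟩ (hty.trans hry.symm)

theorem convexOn_exp_mul (x : ℝ) : ConvexOn ℝ univ fun t => Real.exp (t * x) :=
  convexOn_exp.comp_linearMap (LinearMap.mulRight ℝ x)

theorem hasDerivAt_exp_mul_zero (x : ℝ) : HasDerivAt (fun t => Real.exp (t * x)) x 0 := by
  simpa using ((hasDerivAt_id (0 : ℝ)).mul_const x).exp

theorem abs_slope_exp_mul_le (x : ℝ) {t b : ℝ} (ht : 0 < t) (htb : t ≤ b) :
    |slope (fun u => Real.exp (u * x)) 0 t| ≤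
      max |x| |slope (fun u => Real.exp (u * x)) 0 b| := by
  have hconv := convexOn_exp_mul x
  refine abs_le_max_abs_abs ?_ ?_
  · exact hconv.le_slope_of_hasDerivAt (mem_univ 0) (mem_univ t) ht (hasDerivAt_exp_mul_zero x)
  · exact hconv.slope_mono (mem_univ 0) ⟨mem_univ t, ht.ne'⟩
      ⟨mem_univ b, (ht.trans_le htb).ne'⟩ htb

section MGF

variable {Ω : Type*} [MeasurableSpace Ω] {μ : Measure Ω} {X : Ω → ℝ} {a b : ℝ}

theorem convexOn_mgf : ConvexOn ℝ (integrableExpSet X μ) (mgf X μ) := by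
  refine ⟨convex_integrableExpSet, fun s hs t ht p q hp hq hpq => ?_⟩
  calc mgf X μ (p • s + q • t)
      ≤ ∫ ω, (p * Real.exp (s * X ω) + q * Real.exp (t * X ω)) ∂μ :=
        integral_mono (convex_integrableExpSet hs ht hp hq hpq)
          ((hs.const_mul p).add (ht.const_mul q))
          fun ω => (convexOn_exp_mul (X ω)).2 (mem_univ s) (mem_univ t) hp hq hpq
    _ = p • mgf X μ s + q • mgf X μ t := by
        rw [integral_add (hs.const_mul p) (ht.const_mul q), integral_const_mul,
          integral_const_mul]
        rfl

theorem continuousOn_mgf_Icc (ha : a ∈ integrableExpSet X μ) (hb : b ∈ integrableExpSet X μ) :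
    ContinuousOn (mgf X μ) (Icc a b) := by
  refine continuousOn_of_dominated
    (bound := fun ω => max (Real.exp (a * X ω)) (Real.exp (b * X ω))) (fun t ht => ?_)
    (fun t ht => ae_of_all _ fun ω => ?_) (Integrable.sup ha hb)
    (ae_of_all _ fun ω => by fun_prop)
  · exact (convex_integrableExpSet.ordConnected.out ha hb ht).aestronglyMeasurable
  · rw [Real.norm_eq_abs, Real.abs_exp]
    exact (convexOn_exp_mul (X ω)).le_max_of_mem_Icc (mem_univ a) (mem_univ b) ht

theorem hasDerivWithinAt_mgf_zero [IsFiniteMeasure μ] (hX : Integrable X μ) (hb : 0 < b)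
    (hexp : b ∈ integrableExpSet X μ) : HasDerivWithinAt (mgf X μ) μ[X] (Ioi 0) 0 := by
  have h0 : (0 : ℝ) ∈ integrableExpSet X μ := by simp [integrableExpSet]
  have hmem : ∀ {t}, t ∈ Ioc 0 b → t ∈ integrableExpSet X μ := fun ht =>
    convex_integrableExpSet.ordConnected.out h0 hexp ⟨ht.1.le, ht.2⟩
  have hint : ∀ {t}, t ∈ Ioc 0 b →
      Integrable (fun ω => slope (fun u => Real.exp (u * X ω)) 0 t) μ := fun ht =>
    ((hmem ht).sub h0).smul (_ - (0 : ℝ))⁻¹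
  have hslope : ∀ t ∈ Ioc 0 b,
      ∫ ω, slope (fun u => Real.exp (u * X ω)) 0 t ∂μ = slope (mgf X μ) 0 t := fun t ht => by
    simp only [slope_def_module]
    rw [integral_smul, integral_sub (hmem ht) h0]
    rfl
  have hIoc : Ioc 0 b ∈ 𝓝[>] (0 : ℝ) := Ioc_mem_nhdsGT hb
  rw [hasDerivWithinAt_iff_tendsto_slope' self_notMem_Ioi]
  refine Tendsto.congr' (mem_of_superset hIoc hslope) ?_
  refine tendsto_integral_filter_of_dominated_convergence
    (fun ω => max |X ω| |slope (fun u => Real.exp (u * X ω)) 0 b|)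
    (mem_of_superset hIoc fun t ht => (hint ht).aestronglyMeasurable)
    (mem_of_superset hIoc fun t ht => ae_of_all _ fun ω => abs_slope_exp_mul_le (X ω) ht.1 ht.2)
    (hX.abs.sup (hint ⟨hb, le_rfl⟩).abs) (ae_of_all _ fun ω => ?_)
  exact (hasDerivWithinAt_iff_tendsto_slope' self_notMem_Ioi).1
    (hasDerivAt_exp_mul_zero (X ω)).hasDerivWithinAt

theorem existsUnique_mgf_eq_one [IsProbabilityMeasure μ] (hX : Integrable X μ) (hneg : μ[X] < 0)
    (hb : 0 < b) (hmgf : 1 < mgf X μ b) : ∃! t, t ∈ Ioo 0 b ∧ mgf X μ t = 1 := by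
  have hexp : b ∈ integrableExpSet X μ :=
    Integrable.of_integral_ne_zero (zero_lt_one.trans hmgf).ne'
  have h0 : (0 : ℝ) ∈ integrableExpSet X μ := by simp [integrableExpSet]
  obtain ⟨s, hslope, hs⟩ : ∃ s, slope (mgf X μ) 0 s < 0 ∧ s ∈ Ioo 0 b :=
    (((hasDerivWithinAt_mgf_zero hX hb hexp).limsup_slope_le' self_notMem_Ioi hneg).and
      (Ioo_mem_nhdsGT hb)).exists
  have hs1 : mgf X μ s < 1 := mgf_zero (μ := μ) (X := X) ▸ (slope_neg_iff_of_le hs.1.le).1 hslope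
  exact existsUnique_mem_Ioo_eq_of_convexOn
    (convexOn_mgf.subset (convex_integrableExpSet.ordConnected.out h0 hexp) (convex_Icc 0 b))
    (continuousOn_mgf_Icc h0 hexp) hs mgf_zero.le hs1 hmgf

variable {Y : Ω → ℝ}

theorem integral_rpow_eq_mgf_log (hY : ∀ᵐ ω ∂μ, 0 < Y ω) (t : ℝ) :
    ∫ ω, Y ω ^ t ∂μ = mgf (fun ω => Real.log (Y ω)) μ t := by
  refine integral_congr_ae ?_
  filter_upwards [hY] with ω hω
  rw [Real.rpow_def_of_pos hω, mul_comm]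

theorem existsUnique_integral_rpow_eq_one [IsProbabilityMeasure μ] (hY : ∀ᵐ ω ∂μ, 0 < Y ω)
    (hlog : Integrable (fun ω => Real.log (Y ω)) μ) (hneg : ∫ ω, Real.log (Y ω) ∂μ < 0)
    (hb : 0 < b) (hrpow : 1 < ∫ ω, Y ω ^ b ∂μ) :
    ∃! t, t ∈ Ioo 0 b ∧ ∫ ω, Y ω ^ t ∂μ = 1 := by
  simp only [integral_rpow_eq_mgf_log hY] at hrpow ⊢
  exact existsUnique_mgf_eq_one hlog hneg hb hrpow

theorem integral_const_mul_pow_rpow {k : ℝ} (hk : 0 ≤ k) (hY : ∀ᵐ ω ∂μ, 0 ≤ Y ω) (n : ℕ) (t : ℝ) :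
    ∫ ω, (k * Y ω ^ n) ^ t ∂μ = k ^ t * ∫ ω, Y ω ^ (n * t) ∂μ := by
  rw [← integral_const_mul]
  refine integral_congr_ae ?_
  filter_upwards [hY] with ω hω
  rw [Real.mul_rpow hk (pow_nonneg hω n), ← Real.rpow_natCast_mul hω]

theorem log_const_mul_pow_ae_eq {k : ℝ} (hk : k ≠ 0) (hY : ∀ᵐ ω ∂μ, Y ω ≠ 0) (n : ℕ) :
    (fun ω => Real.log (k * Y ω ^ n)) =ᵐ[μ] fun ω => Real.log k + n * Real.log (Y ω) := by
  filter_upwards [hY] with ω hω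
  rw [Real.log_mul hk (pow_ne_zero n hω), Real.log_pow]

theorem integrable_log_const_mul_pow [IsFiniteMeasure μ] {k : ℝ} (hk : k ≠ 0)
    (hY : ∀ᵐ ω ∂μ, Y ω ≠ 0) (hlog : Integrable (fun ω => Real.log (Y ω)) μ) (n : ℕ) :
    Integrable (fun ω => Real.log (k * Y ω ^ n)) μ :=
  ((integrable_const _).add (hlog.const_mul _)).congr (log_const_mul_pow_ae_eq hk hY n).symm

theorem integral_log_const_mul_pow [IsProbabilityMeasure μ] {k : ℝ} (hk : k ≠ 0)
    (hY : ∀ᵐ ω ∂μ, Y ω ≠ 0) (hlog : Integrable (fun ω => Real.log (Y ω)) μ) (n : ℕ) :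
    ∫ ω, Real.log (k * Y ω ^ n) ∂μ = Real.log k + n * ∫ ω, Real.log (Y ω) ∂μ := by
  rw [integral_congr_ae (log_const_mul_pow_ae_eq hk hY n),
    integral_add (integrable_const _) (hlog.const_mul _), integral_const_mul, integral_const,
    probReal_univ, one_smul]

end MGF

theorem unique_rho_k_general
    {Ω : Type*} [MeasurableSpace Ω] (P : Measure Ω) [IsProbabilityMeasure P]
    (κ : Ω → ℝ) (hpos : ∀ᵐ ω ∂P, 0 < κ ω)
    (ν : ℝ) (hν : 0 < ν) (hν1 : ∫ ω, κ ω ^ ν ∂P = 1)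
    (k : ℝ) (hk : 1 < k) (hk2 : k < Real.exp (-2 * ∫ ω, Real.log (κ ω) ∂P)) :
    ∃! ϱ : ℝ, ϱ ∈ Set.Ioo 0 (ν / 2) ∧ ∫ ω, (k * κ ω ^ 2) ^ ϱ ∂P = 1 := by
  have hk0 : 0 < k := zero_lt_one.trans hk
  have hlogk : Real.log k < -2 * ∫ ω, Real.log (κ ω) ∂P := (Real.log_lt_iff_lt_exp hk0).2 hk2
  -- A non-integrable `log κ` would have integral `0`, and then `k < exp 0 = 1`.
  have hκ : Integrable (fun ω => Real.log (κ ω)) P :=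
    Integrable.of_integral_ne_zero (by linarith [Real.log_pos hk] : _ < (0 : ℝ)).ne
  have hne : ∀ᵐ ω ∂P, κ ω ≠ 0 := hpos.mono fun _ h => h.ne'
  refine existsUnique_integral_rpow_eq_one (hpos.mono fun _ h => by positivity)
    (integrable_log_const_mul_pow hk0.ne' hne hκ 2) ?_ (half_pos hν) ?_
  · rw [integral_log_const_mul_pow hk0.ne' hne hκ, Nat.cast_ofNat]
    linarith
  · rw [integral_const_mul_pow_rpow hk0.le (hpos.mono fun _ h => h.le), Nat.cast_ofNat,
      mul_div_cancel₀ ν two_ne_zero, hν1, mul_one]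
    exact Real.one_lt_rpow hk (half_pos hν)

/-- For a positive random variable `κ` with compactly supported distribution in
`(0,∞)`, `P(κ ≠ 1) > 0` and `E[κ^ν] = 1` for some `ν > 0`, every `k` with
`1 < k < exp(−2·E[log κ])` admits a unique `ϱ_k ∈ (0, ν/2)` with `E[(k κ²)^{ϱ_k}] = 1`. -/
theorem unique_rho_k
    {Ω : Type*} [MeasurableSpace Ω] (P : Measure Ω) [IsProbabilityMeasure P]
    (κ : Ω → ℝ) (hmeas : Measurable κ)
    (hsupp : ∃ m M : ℝ, 0 < m ∧ m ≤ M ∧ ∀ᵐ ω ∂P, m ≤ κ ω ∧ κ ω ≤ M)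
    (hne : 0 < P {ω | κ ω ≠ 1})
    (ν : ℝ) (hν : 0 < ν) (hν1 : ∫ ω, κ ω ^ ν ∂P = 1)
    (k : ℝ) (hk : 1 < k) (hk2 : k < Real.exp (-2 * ∫ ω, Real.log (κ ω) ∂P)) :
    ∃! ϱ : ℝ, ϱ ∈ Set.Ioo 0 (ν / 2) ∧ ∫ ω, (k * κ ω ^ 2) ^ ϱ ∂P = 1 :=
  have ⟨_, _, hm, _, hκ⟩ := hsupp
  unique_rho_k_general P κ (hκ.mono fun _ h => hm.trans_le h.1) ν hν hν1 k hk hk2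
end

section
/- Let κ be a positive random variable whose distribution has compact support in (0,∞), with P(κ ≠ 1) > 0, and let ν > 0 satisfy E[κ^ν] = 1. For each k with 1 < k < exp(−2·E[log κ]) let ϱ_k be the unique number in (0, ν/2) with E[(k κ²)^{ϱ_k}] = 1. Then k ↦ ϱ_k is continuous on this interval and lim_{k→1⁺} ϱ_k = ν/2. -/
open MeasureTheory

/-!
Put `X = log (κ ^ 2)` and let `Λ = cgf X` be its cumulant generating function. Taking logarithms in
`E[(k κ²) ^ r] = 1` gives `Λ r / r = -log k`. Since `κ` is not almost surely constant, `Λ` is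
strictly convex, and `Λ 0 = 0`, so the secant slope `r ↦ Λ r / r` is strictly increasing on the
positive exponents with finite moment. An inverse of a strictly monotone function on an interval is
continuous, so the root depends continuously on `k > 0`. The exponent `ν / 2` is the root at
`k = 1`, hence also the limit as `k → 1⁺`. Finally `E X < Λ (ν / 2) / (ν / 2) = 0` by Jensen, so the
interval of admissible `k` is a right neighbourhood of `1`.
-/

open Filter ProbabilityTheory Real Set
open scoped Topology

theorem tendsto_of_strictMonoOn_comp {α β ι : Type*} [LinearOrder α] [TopologicalSpace α]
    [OrderTopology α] [LinearOrder β] [TopologicalSpace β] [OrderClosedTopology β] {f : α → β}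
    {s : Set α} {x : α} {l : Filter ι} {u : ι → α} (hf : StrictMonoOn f s) (hs : s.OrdConnected)
    (hx : x ∈ s) (hu : ∀ᶠ i in l, u i ∈ s) (hfu : Tendsto (fun i => f (u i)) l (𝓝 (f x))) :
    Tendsto u l (𝓝 x) := by
  refine tendsto_order.2 ⟨fun a ha => ?_, fun b hb => ?_⟩
  · by_cases has : a ∈ s
    · filter_upwards [hu, hfu.eventually_const_lt (hf has hx ha)] with i his hi
      exact (hf.lt_iff_lt has his).1 hi
    · filter_upwards [hu] with i his
      by_contra! hia
      exact has (hs.out his hx ⟨hia, ha.le⟩)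
  · by_cases hbs : b ∈ s
    · filter_upwards [hu, hfu.eventually_lt_const (hf hx hbs hb)] with i his hi
      exact (hf.lt_iff_lt his hbs).1 hi
    · filter_upwards [hu] with i his
      by_contra! hib
      exact hbs (hs.out hx his ⟨hb.le, hib⟩)

section Cumulant

variable {Ω : Type*} [MeasurableSpace Ω] {μ : Measure Ω} {X : Ω → ℝ} {t : ℝ}

theorem integral_strictConvexOn_comp_lt {E : Type*} [AddCommMonoid E] [Module ℝ E] {s : Set E}
    {φ : E → ℝ} {U V : Ω → E} {a b : ℝ} (hφ : StrictConvexOn ℝ s φ) (hU : ∀ᵐ ω ∂μ, U ω ∈ s)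
    (hV : ∀ᵐ ω ∂μ, V ω ∈ s) (hUV : ¬ U =ᵐ[μ] V) (ha : 0 < a) (hb : 0 < b) (hab : a + b = 1)
    (hφU : Integrable (fun ω => φ (U ω)) μ) (hφV : Integrable (fun ω => φ (V ω)) μ)
    (hφUV : Integrable (fun ω => φ (a • U ω + b • V ω)) μ) :
    ∫ ω, φ (a • U ω + b • V ω) ∂μ < a * ∫ ω, φ (U ω) ∂μ + b * ∫ ω, φ (V ω) ∂μ := by
  have hint : Integrable (fun ω => a * φ (U ω) + b * φ (V ω)) μ :=
    (hφU.const_mul a).add (hφV.const_mul b)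
  have hle : (fun ω => φ (a • U ω + b • V ω)) ≤ᵐ[μ] fun ω => a * φ (U ω) + b * φ (V ω) := by
    filter_upwards [hU, hV] with ω hUω hVω
    exact hφ.convexOn.2 hUω hVω ha.le hb.le hab
  rw [← integral_const_mul, ← integral_const_mul,
    ← integral_add (hφU.const_mul a) (hφV.const_mul b)]
  refine (integral_mono_ae hφUV hint hle).lt_of_ne fun heq => hUV ?_
  filter_upwards [hU, hV, (integral_eq_iff_of_ae_le hφUV hint hle).1 heq] with ω hUω hVω hω
  by_contra hne
  exact (hφ.2 hUω hVω hne ha hb hab).ne hω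

theorem integrable_exp_mul_sub (ht : t ∈ integrableExpSet X μ) (c : ℝ) :
    Integrable (fun ω => exp (t * X ω - c)) μ := by
  simpa only [exp_sub] using (integrable_of_mem_integrableExpSet ht).div_const (exp c)

theorem integral_exp_mul_sub [NeZero μ] (ht : t ∈ integrableExpSet X μ) (c : ℝ) :
    ∫ ω, exp (t * X ω - c) ∂μ = exp (cgf X μ t - c) := by
  simp only [exp_sub, integral_div, exp_cgf (integrable_of_mem_integrableExpSet ht), mgf]

theorem strictConvexOn_cgf (hX : ∀ c : ℝ, ¬ X =ᵐ[μ] fun _ => c) :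
    StrictConvexOn ℝ (integrableExpSet X μ) (cgf X μ) := by
  have : NeZero μ := ⟨by rintro rfl; exact hX 0 (by simp [EventuallyEq])⟩
  refine ⟨convex_integrableExpSet, fun s hs t ht hst a b ha hb hab => ?_⟩
  set Λ := cgf X μ
  have hmem : a • s + b • t ∈ integrableExpSet X μ :=
    convex_integrableExpSet hs ht ha.le hb.le hab
  have hcombo (ω : Ω) : a • (s * X ω - Λ s) + b • (t * X ω - Λ t) =
      (a • s + b • t) * X ω - (a • Λ s + b • Λ t) := by
    simp only [smul_eq_mul]; ring
  have hne : ¬ (fun ω => s * X ω - Λ s) =ᵐ[μ] fun ω => t * X ω - Λ t := by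
    refine fun h => hX ((Λ s - Λ t) / (s - t)) ?_
    filter_upwards [h] with ω hω
    rw [eq_div_iff (sub_ne_zero.2 hst)]
    linarith
  -- Both tilted densities `exp (s X - Λ s)` and `exp (t X - Λ t)` have integral one.
  have hlt := integral_strictConvexOn_comp_lt strictConvexOn_exp (by simp) (by simp) hne ha hb hab
    (integrable_exp_mul_sub hs _) (integrable_exp_mul_sub ht _)
    (by simpa only [hcombo] using integrable_exp_mul_sub hmem _)
  simp only [hcombo, integral_exp_mul_sub hmem, integral_exp_mul_sub hs, integral_exp_mul_sub ht,
    Λ, sub_self, exp_zero, mul_one, hab] at hlt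
  exact sub_neg.1 (exp_lt_one_iff.1 hlt)

variable [IsProbabilityMeasure μ]

theorem strictMonoOn_cgf_div (hX : ∀ c : ℝ, ¬ X =ᵐ[μ] fun _ => c) :
    StrictMonoOn (fun t => cgf X μ t / t) (integrableExpSet X μ \ {0}) := by
  intro s hs t ht hst
  have hzero : (0 : ℝ) ∈ integrableExpSet X μ := by simp [integrableExpSet]
  simpa using (strictConvexOn_cgf hX).secant_strict_mono hzero hs.1 ht.1 hs.2 ht.2 hst

theorem mul_integral_lt_cgf (hX : ∀ c : ℝ, ¬ X =ᵐ[μ] fun _ => c) (hint : Integrable X μ)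
    (ht : t ∈ integrableExpSet X μ) (ht0 : t ≠ 0) : t * ∫ ω, X ω ∂μ < cgf X μ t := by
  rcases strictConvexOn_exp.ae_eq_const_or_map_average_lt continuous_exp.continuousOn isClosed_univ
    (by simp) (hint.const_mul t) (integrable_of_mem_integrableExpSet ht) with hconst | hlt
  · refine absurd ?_ (hX ((⨍ ω, t * X ω ∂μ) / t))
    filter_upwards [hconst] with ω hω
    rw [eq_div_iff ht0, mul_comm]
    exact hω
  · rwa [average_eq_integral, average_eq_integral, integral_const_mul, ← mgf,
      ← exp_cgf (integrable_of_mem_integrableExpSet ht), exp_lt_exp] at hlt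

theorem integral_neg_of_cgf_eq_zero (hX : ∀ c : ℝ, ¬ X =ᵐ[μ] fun _ => c) (hint : Integrable X μ)
    (ht : t ∈ integrableExpSet X μ) (ht0 : 0 < t) (hcgf : cgf X μ t = 0) : ∫ ω, X ω ∂μ < 0 :=
  (pos_iff_neg_of_mul_neg (hcgf ▸ mul_integral_lt_cgf hX hint ht ht0.ne')).1 ht0

theorem not_ae_eq_const_of_cgf_eq_zero (hX : ¬ X =ᵐ[μ] 0) (ht0 : t ≠ 0) (ht : cgf X μ t = 0)
    (c : ℝ) : ¬ X =ᵐ[μ] fun _ => c := by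
  intro hc
  have hcgf : cgf X μ t = t * c := by rw [cgf, mgf_congr hc, ← cgf, cgf_const]
  obtain rfl : c = 0 := (mul_eq_zero.1 (hcgf.symm.trans ht)).resolve_left ht0
  exact hX hc

end Cumulant

section ExponentEquation

variable {Ω : Type*} [MeasurableSpace Ω] {μ : Measure Ω} {Y : Ω → ℝ}

theorem integrable_log_of_ae_mem_Icc [IsFiniteMeasure μ] {m M : ℝ} (hY : AEMeasurable Y μ)
    (hm : 0 < m) (hmem : ∀ᵐ ω ∂μ, Y ω ∈ Icc m M) : Integrable (fun ω => log (Y ω)) μ := by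
  refine Integrable.of_mem_Icc (log m) (log M) hY.log ?_
  filter_upwards [hmem] with ω hω
  exact ⟨log_le_log hm hω.1, log_le_log (hm.trans_le hω.1) hω.2⟩

theorem not_log_pow_ae_eq_zero {n : ℕ} (hn : n ≠ 0) (hY : ∀ᵐ ω ∂μ, 0 < Y ω)
    (hne : 0 < μ {ω | Y ω ≠ 1}) : ¬ (fun ω => log (Y ω ^ n)) =ᵐ[μ] 0 := by
  refine fun h => hne.ne' (ae_iff.1 ?_)
  filter_upwards [hY, h] with ω hω hlog
  have hpow : Y ω ^ n = 1 := eq_one_of_pos_of_log_eq_zero (pow_pos hω n) hlog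
  exact (pow_eq_one_iff_of_nonneg hω.le hn).1 hpow

theorem cgf_log_div_eq_of_integral_mul_rpow_eq_one {k r : ℝ} (hY : ∀ᵐ ω ∂μ, 0 < Y ω) (hk : 0 < k)
    (hr : r ≠ 0) (h : ∫ ω, (k * Y ω) ^ r ∂μ = 1) :
    r ∈ integrableExpSet (fun ω => log (Y ω)) μ ∧
      cgf (fun ω => log (Y ω)) μ r / r = -log k := by
  have : NeZero μ := ⟨by rintro rfl; simp at h⟩
  have hexp : (fun ω => (k * Y ω) ^ r) =ᵐ[μ] fun ω => exp (r * log (Y ω)) * exp (r * log k) := by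
    filter_upwards [hY] with ω hω
    rw [rpow_def_of_pos (mul_pos hk hω), log_mul hk.ne' hω.ne', ← exp_add]
    ring_nf
  rw [integral_congr_ae hexp, integral_mul_const] at h
  have hmem : r ∈ integrableExpSet (fun ω => log (Y ω)) μ := by
    by_contra hnot
    rw [integral_undef hnot, zero_mul] at h
    exact zero_ne_one h
  rw [← mgf, ← exp_cgf hmem, ← exp_add, exp_eq_one_iff] at h
  refine ⟨hmem, (div_eq_iff hr).2 ?_⟩
  linarith

theorem tendsto_of_integral_mul_rpow_eq_one [IsProbabilityMeasure μ] {ι : Type*} {l : Filter ι}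
    {k r : ι → ℝ} {k₀ r₀ : ℝ} (hY : ∀ᵐ ω ∂μ, 0 < Y ω)
    (hconst : ∀ c : ℝ, ¬ (fun ω => log (Y ω)) =ᵐ[μ] fun _ => c)
    (hk₀ : 0 < k₀) (hr₀ : 0 < r₀) (h₀ : ∫ ω, (k₀ * Y ω) ^ r₀ ∂μ = 1) (hk : Tendsto k l (𝓝 k₀))
    (hr : ∀ᶠ i in l, 0 < r i ∧ ∫ ω, (k i * Y ω) ^ r i ∂μ = 1) : Tendsto r l (𝓝 r₀) := by
  set X := fun ω => log (Y ω)
  have hroot : ∀ᶠ i in l, 0 < r i ∧ r i ∈ integrableExpSet X μ ∧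
      cgf X μ (r i) / r i = -log (k i) := by
    filter_upwards [hr, hk.eventually_const_lt hk₀] with i hi hki
    exact ⟨hi.1, cgf_log_div_eq_of_integral_mul_rpow_eq_one hY hki hi.1.ne' hi.2⟩
  obtain ⟨hmem₀, hslope₀⟩ := cgf_log_div_eq_of_integral_mul_rpow_eq_one hY hk₀ hr₀.ne' h₀
  have hmono : StrictMonoOn (fun t => cgf X μ t / t) (integrableExpSet X μ ∩ Ioi 0) :=
    (strictMonoOn_cgf_div hconst).mono fun t ht => ⟨ht.1, ht.2.ne'⟩
  refine tendsto_of_strictMonoOn_comp hmono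
    (convex_integrableExpSet.ordConnected.inter ordConnected_Ioi) ⟨hmem₀, hr₀⟩
    (hroot.mono fun i hi => ⟨hi.2.1, hi.1⟩) ?_
  rw [hslope₀]
  exact (hk.log hk₀.ne').neg.congr' (hroot.mono fun i hi => hi.2.2.symm)

end ExponentEquation

theorem rho_k_continuous_and_tendsto_general
    {Ω : Type*} [MeasurableSpace Ω] (P : Measure Ω) [IsProbabilityMeasure P]
    (κ : Ω → ℝ) (hpos : ∀ᵐ ω ∂P, 0 < κ ω) (hlog : Integrable (fun ω => Real.log (κ ω)) P)
    (hne : 0 < P {ω | κ ω ≠ 1})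
    (ν : ℝ) (hν : 0 < ν) (hν1 : ∫ ω, κ ω ^ ν ∂P = 1)
    (ϱ : ℝ → ℝ)
    (hϱ : ∀ k ∈ Set.Ioo 1 (Real.exp (-2 * ∫ ω, Real.log (κ ω) ∂P)),
      0 < ϱ k ∧ ∫ ω, (k * κ ω ^ 2) ^ ϱ k ∂P = 1) :
    ContinuousOn ϱ (Set.Ioo 1 (Real.exp (-2 * ∫ ω, Real.log (κ ω) ∂P))) ∧
    Filter.Tendsto ϱ (nhdsWithin 1 (Set.Ioi 1)) (nhds (ν / 2)) := by
  have hsq : ∀ᵐ ω ∂P, 0 < κ ω ^ 2 := hpos.mono fun ω hω => pow_pos hω 2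
  have hν2 : 0 < ν / 2 := half_pos hν
  have hroot : ∫ ω, (1 * κ ω ^ 2) ^ (ν / 2) ∂P = 1 := by
    refine (integral_congr_ae ?_).trans hν1
    filter_upwards [hpos] with ω hω
    rw [one_mul, ← rpow_natCast_mul hω.le, Nat.cast_two, mul_div_cancel₀ _ two_ne_zero]
  obtain ⟨hmem, hslope⟩ := cgf_log_div_eq_of_integral_mul_rpow_eq_one hsq one_pos hν2.ne' hroot
  have hcgf : cgf (fun ω => log (κ ω ^ 2)) P (ν / 2) = 0 := by
    rwa [log_one, neg_zero, div_eq_zero_iff, or_iff_left hν2.ne'] at hslope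
  have hconst := not_ae_eq_const_of_cgf_eq_zero (not_log_pow_ae_eq_zero two_ne_zero hpos hne)
    hν2.ne' hcgf
  have hmean : 2 * ∫ ω, log (κ ω) ∂P < 0 := by
    simpa only [log_pow, Nat.cast_two, integral_const_mul] using
      integral_neg_of_cgf_eq_zero hconst (by simpa only [log_pow] using hlog.const_mul _)
        hmem hν2 hcgf
  have hnhds : Ioo 1 (exp (-2 * ∫ ω, log (κ ω) ∂P)) ∈ 𝓝[>] 1 :=
    Ioo_mem_nhdsGT (one_lt_exp_iff.2 (by linarith))
  exact ⟨fun k hk => tendsto_of_integral_mul_rpow_eq_one hsq hconst (one_pos.trans hk.1)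
      (hϱ k hk).1 (hϱ k hk).2 (tendsto_id'.2 nhdsWithin_le_nhds)
      (eventually_mem_nhdsWithin.mono hϱ),
    tendsto_of_integral_mul_rpow_eq_one hsq hconst one_pos hν2 hroot
      (tendsto_id'.2 nhdsWithin_le_nhds) (mem_of_superset hnhds hϱ)⟩

/-- Given a positive random variable `κ` with compactly supported distribution in
`(0,∞)`, `P(κ ≠ 1) > 0` and `E[κ^ν] = 1` with `ν > 0`, if for each
`k ∈ (1, exp(−2·E[log κ]))` the number `ϱ k` lies in `(0, ν/2)` and satisfies
`E[(k κ²)^{ϱ k}] = 1`, then `k ↦ ϱ k` is continuous on this interval and `ϱ k → ν/2` as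
`k → 1⁺`. -/
theorem rho_k_continuous_and_tendsto
    {Ω : Type*} [MeasurableSpace Ω] (P : Measure Ω) [IsProbabilityMeasure P]
    (κ : Ω → ℝ) (hmeas : Measurable κ)
    (hsupp : ∃ m M : ℝ, 0 < m ∧ m ≤ M ∧ ∀ᵐ ω ∂P, m ≤ κ ω ∧ κ ω ≤ M)
    (hne : 0 < P {ω | κ ω ≠ 1})
    (ν : ℝ) (hν : 0 < ν) (hν1 : ∫ ω, κ ω ^ ν ∂P = 1)
    (ϱ : ℝ → ℝ)
    (hϱ : ∀ k ∈ Set.Ioo 1 (Real.exp (-2 * ∫ ω, Real.log (κ ω) ∂P)),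
      ϱ k ∈ Set.Ioo 0 (ν / 2) ∧ ∫ ω, (k * κ ω ^ 2) ^ ϱ k ∂P = 1) :
    ContinuousOn ϱ (Set.Ioo 1 (Real.exp (-2 * ∫ ω, Real.log (κ ω) ∂P))) ∧
    Filter.Tendsto ϱ (nhdsWithin 1 (Set.Ioi 1)) (nhds (ν / 2)) := by
  obtain ⟨m, M, hm, -, hb⟩ := hsupp
  exact rho_k_continuous_and_tendsto_general P κ (hb.mono fun _ hω => hm.trans_le hω.1)
    (integrable_log_of_ae_mem_Icc hmeas.aemeasurable hm hb) hne ν hν hν1 ϱ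
    fun k hk => ⟨(hϱ k hk).1.1, (hϱ k hk).2⟩
end

section
/- There exists ε₀ ∈ (0,1), depending only on k, C1, C2, C3, C4, such that for all ε ∈ (0, ε₀] the following deterministic implication holds: if the orbit satisfies x(0) ∈ 𝔯_I and there exist integers 0 < M₁ < M₂ ≤ N with x(M₁) ∈ 𝔯_I^c and x(M₂) ∈ 𝔯_I, then there exist integers 2 < N₁ ≤ N₂ < N such that ∏_{n=N₁}^{N₂} k κ_n² > (2 C4² K² ε²)⁻¹. -/
open Matrix

/-- The Möbius action of a real `2×2` matrix on the real projective line `ℝ̄ = ℝ ∪ {∞}`,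
extended projectively through `∞`. -/
noncomputable def mobius (M : Matrix (Fin 2) (Fin 2) ℝ) (x : OnePoint ℝ) : OnePoint ℝ :=
  match (x : Option ℝ) with
  | none => if M 1 0 = 0 then OnePoint.infty else ((M 0 0 / M 1 0 : ℝ) : OnePoint ℝ)
  | some r =>
      if M 1 0 * r + M 1 1 = 0 then OnePoint.infty
      else ((M 0 0 * r + M 0 1) / (M 1 0 * r + M 1 1) : ℝ)

/-- The region `𝔯_I = {x ∈ ℝ : x ≤ 0}` inside `ℝ̄`. -/
def regI (x : OnePoint ℝ) : Prop := ∃ r : ℝ, x = (r : OnePoint ℝ) ∧ r ≤ 0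

/-- The rotation matrix `Q_n` of the perturbed Prüfer dynamics. -/
noncomputable def Qmat (ε a b α β γ δ : ℝ) : Matrix (Fin 2) (Fin 2) ℝ :=
  !![1 + ε ^ 2 * α, ε * (a - b - ε * β); -ε * (a + b + ε * γ), 1 + ε ^ 2 * δ]

/-- The hyperbolic matrix `D_n = diag(κ, 1/κ)`. -/
noncomputable def Dmat (κ : ℝ) : Matrix (Fin 2) (Fin 2) ℝ := !![κ, 0; 0, κ⁻¹]

/-- The integer-time orbit `x(n)` of the Dyson–Schmidt dynamics:
`x(n) = Q_n · (D_n · x(n−1))`. -/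
noncomputable def orbit (Q D : ℕ → Matrix (Fin 2) (Fin 2) ℝ) (x0 : OnePoint ℝ) :
    ℕ → OnePoint ℝ
  | 0 => x0
  | n + 1 => mobius (Q (n + 1)) (mobius (D (n + 1)) (orbit Q D x0 n))

/-!
Put `q = √k` and `h = Rε` with `R` a large constant. For small `ε`, `Q_n` maps `z ≤ 1 / h` to
at most `q * max z h`. So as long as `D_n` does not push the orbit above `1 / h`, each step either
multiplies it by at most `q κ_n²` or resets it to height at most `q h`. The orbit leaves `𝔯_I` at
height at most `q h`, and can come back only through `∞`, that is, after exceeding `1 / h`. Hence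
some window satisfies `∏ q κ_n² > h⁻²`. Such a window is long because `κ_n` is bounded, so the
remaining factor `q` per step in `k κ_n² = q (q κ_n²)` beats every constant. In particular it
absorbs the loss from dropping both end factors, which gives the strict bounds on the window.
-/

section

open Filter Topology

theorem mobius_coe {M : Matrix (Fin 2) (Fin 2) ℝ} {r : ℝ} (h : M 1 0 * r + M 1 1 ≠ 0) :
    mobius M r = ((M 0 0 * r + M 0 1) / (M 1 0 * r + M 1 1) : ℝ) :=
  if_neg h

theorem mobius_Dmat_coe {κ : ℝ} (hκ : κ ≠ 0) (y : ℝ) :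
    mobius (Dmat κ) y = (κ ^ 2 * y : ℝ) := by
  have hden : Dmat κ 1 0 * y + Dmat κ 1 1 ≠ 0 := by simpa [Dmat] using hκ
  rw [mobius_coe hden]
  congr 1
  simp only [Dmat, of_apply, cons_val', cons_val_zero, cons_val_one, cons_val_fin_one]
  field_simp
  ring

theorem not_regI_coe_iff {y : ℝ} : ¬ regI y ↔ 0 < y := by
  simp [regI]

/-- `M` is `θ / 2`-close to the identity on the diagonal, and off the diagonal it has the sign
pattern of the rotation `z ↦ (z + u) / (1 - v z)`, with `u` and `v` at most `h θ / 2`. Here `θ`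
measures the relative error and `h` is the height below which the rotation, rather than the
hyperbolic factor, dominates the dynamics. -/
structure IsNearRotation (θ h : ℝ) (M : Matrix (Fin 2) (Fin 2) ℝ) : Prop where
  abs_apply_zero_zero_sub_one_le : |M 0 0 - 1| ≤ θ / 2
  abs_apply_one_one_sub_one_le : |M 1 1 - 1| ≤ θ / 2
  apply_zero_one_nonneg : 0 ≤ M 0 1
  apply_zero_one_le : M 0 1 ≤ h * (θ / 2)
  apply_one_zero_nonpos : M 1 0 ≤ 0
  neg_apply_one_zero_le : -M 1 0 ≤ h * (θ / 2)

namespace IsNearRotation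

variable {θ h q z : ℝ} {M : Matrix (Fin 2) (Fin 2) ℝ}

theorem height_nonneg (hM : IsNearRotation θ h M) (hθ : 0 < θ) : 0 ≤ h :=
  nonneg_of_mul_nonneg_left (hM.apply_zero_one_nonneg.trans hM.apply_zero_one_le) (half_pos hθ)

theorem one_sub_le_denom (hM : IsNearRotation θ h M) (hθ : 0 < θ) (hz : h * z ≤ 1) :
    1 - θ ≤ M 1 0 * z + M 1 1 := by
  have hdiag : 1 - θ / 2 ≤ M 1 1 := by
    linarith [(abs_le.mp hM.abs_apply_one_one_sub_one_le).1]
  have hoff : -M 1 0 * z ≤ θ / 2 := by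
    rcases le_total z 0 with hz0 | hz0
    · exact (mul_nonpos_of_nonneg_of_nonpos (neg_nonneg.mpr hM.apply_one_zero_nonpos) hz0).trans
        (half_pos hθ).le
    · calc -M 1 0 * z ≤ h * (θ / 2) * z :=
            mul_le_mul_of_nonneg_right hM.neg_apply_one_zero_le hz0
        _ = h * z * (θ / 2) := by ring
        _ ≤ θ / 2 := mul_le_of_le_one_left (half_pos hθ).le hz
  linarith

theorem numer_le (hM : IsNearRotation θ h M) (hθ : θ ∈ Set.Ioo 0 1) :
    M 0 0 * z + M 0 1 ≤ (1 + θ) * max z h := by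
  have hdiag := abs_le.mp hM.abs_apply_zero_zero_sub_one_le
  have hmax : 0 ≤ max z h := (hM.height_nonneg hθ.1).trans (le_max_right z h)
  calc M 0 0 * z + M 0 1 ≤ M 0 0 * max z h + max z h * (θ / 2) :=
        add_le_add
          (mul_le_mul_of_nonneg_left (le_max_left z h) (by linarith [hθ.2]))
          (hM.apply_zero_one_le.trans
            (mul_le_mul_of_nonneg_right (le_max_right z h) (half_pos hθ.1).le))
    _ = (M 0 0 + θ / 2) * max z h := by ring
    _ ≤ (1 + θ) * max z h := mul_le_mul_of_nonneg_right (by linarith) hmax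

theorem exists_mobius_coe_eq (hM : IsNearRotation θ h M) (hθ : θ ∈ Set.Ioo 0 1)
    (hq : 1 + θ ≤ q * (1 - θ)) (hz : h * z ≤ 1) :
    ∃ w : ℝ, mobius M z = w ∧ w ≤ q * max z h ∧ (0 < z → 0 < w) := by
  have hθ_pos : 0 < 1 - θ := sub_pos.mpr hθ.2
  have hden_ge := hM.one_sub_le_denom hθ.1 hz
  have hden : 0 < M 1 0 * z + M 1 1 := hθ_pos.trans_le hden_ge
  have hmax : 0 ≤ max z h := (hM.height_nonneg hθ.1).trans (le_max_right z h)
  have hq_pos : 0 < q := pos_of_mul_pos_left (by linarith [hθ.1]) hθ_pos.le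
  refine ⟨_, mobius_coe hden.ne', ?_, fun hz_pos => div_pos ?_ hden⟩
  · rw [div_le_iff₀ hden]
    calc M 0 0 * z + M 0 1 ≤ (1 + θ) * max z h := hM.numer_le hθ
      _ ≤ q * (1 - θ) * max z h := mul_le_mul_of_nonneg_right hq hmax
      _ = q * max z h * (1 - θ) := by ring
      _ ≤ q * max z h * (M 1 0 * z + M 1 1) :=
        mul_le_mul_of_nonneg_left hden_ge (mul_nonneg hq_pos.le hmax)
  · have hdiag : 0 < M 0 0 := by
      linarith [(abs_le.mp hM.abs_apply_zero_zero_sub_one_le).1, hθ.2]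
    exact add_pos_of_pos_of_nonneg (mul_pos hdiag hz_pos) hM.apply_zero_one_nonneg

end IsNearRotation

theorem eventually_isNearRotation_Qmat {C1 θ : ℝ} (C2 C3 : ℝ) (hC1 : 0 < C1) (hθ : 0 < θ) :
    ∀ᶠ ε in 𝓝[>] (0 : ℝ), ∀ a b α β γ δ : ℝ, C1 ≤ a - |b| → a + |b| ≤ C2 →
      |α| ≤ C3 → |β| ≤ C3 → |γ| ≤ C3 → |δ| ≤ C3 →
        IsNearRotation θ (4 * C2 / θ * ε) (Qmat ε a b α β γ δ) := by
  have hlinear : ∀ᶠ ε in 𝓝[>] (0 : ℝ), ε * C3 < C1 :=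
    nhdsWithin_le_nhds <| (by fun_prop : Continuous fun ε : ℝ => ε * C3).continuousAt.eventually_lt
      continuousAt_const (by simpa using hC1)
  have hquadratic : ∀ᶠ ε in 𝓝[>] (0 : ℝ), ε ^ 2 * C3 < θ / 2 :=
    nhdsWithin_le_nhds <|
      (by fun_prop : Continuous fun ε : ℝ => ε ^ 2 * C3).continuousAt.eventually_lt
        continuousAt_const (by simpa using hθ)
  filter_upwards [self_mem_nhdsWithin, hlinear, hquadratic] with ε (hε : 0 < ε) hlin hquad
    a b α β γ δ hab_ge hab_le hα hβ hγ hδ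
  have hb := abs_le.mp (le_refl |b|)
  have abs_linear_lt {t : ℝ} (ht : |t| ≤ C3) : |ε * t| < C1 := by
    rw [abs_mul, abs_of_pos hε]
    exact (mul_le_mul_of_nonneg_left ht hε.le).trans_lt hlin
  have abs_quadratic_le {t : ℝ} (ht : |t| ≤ C3) : |1 + ε ^ 2 * t - 1| ≤ θ / 2 := by
    rw [add_sub_cancel_left, abs_mul, abs_of_pos (pow_pos hε 2)]
    exact (mul_le_mul_of_nonneg_left ht (sq_nonneg ε)).trans hquad.le
  have hheight : 4 * C2 / θ * ε * (θ / 2) = ε * (2 * C2) := by field_simp; ring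
  have hβ' := abs_lt.mp (abs_linear_lt hβ)
  have hγ' := abs_lt.mp (abs_linear_lt hγ)
  have hrate_β : a - b - ε * β ∈ Set.Icc 0 (2 * C2) := ⟨by linarith, by linarith⟩
  have hrate_γ : a + b + ε * γ ∈ Set.Icc 0 (2 * C2) := ⟨by linarith, by linarith⟩
  refine ⟨abs_quadratic_le hα, abs_quadratic_le hδ, mul_nonneg hε.le hrate_β.1,
    (mul_le_mul_of_nonneg_left hrate_β.2 hε.le).trans_eq hheight.symm,
    mul_nonpos_of_nonpos_of_nonneg (neg_nonpos.mpr hε.le) hrate_γ.1, ?_⟩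
  calc -(-ε * (a + b + ε * γ)) = ε * (a + b + ε * γ) := by ring
    _ ≤ ε * (2 * C2) := mul_le_mul_of_nonneg_left hrate_γ.2 hε.le
    _ = 4 * C2 / θ * ε * (θ / 2) := hheight.symm

section Orbit

variable {θ h q : ℝ} {Q : ℕ → Matrix (Fin 2) (Fin 2) ℝ} {κ : ℕ → ℝ} {x0 : OnePoint ℝ}

theorem exists_orbit_succ_eq_coe {n : ℕ} {y : ℝ} (hθ : θ ∈ Set.Ioo 0 1)
    (hq : 1 + θ ≤ q * (1 - θ)) (hQ : IsNearRotation θ h (Q (n + 1))) (hκ : κ (n + 1) ≠ 0)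
    (hy : orbit Q (fun n => Dmat (κ n)) x0 n = y) (hbelow : h * (κ (n + 1) ^ 2 * y) ≤ 1) :
    ∃ w : ℝ, orbit Q (fun n => Dmat (κ n)) x0 (n + 1) = w ∧
      w ≤ q * max (κ (n + 1) ^ 2 * y) h ∧ (0 < y → 0 < w) := by
  obtain ⟨w, hw, hw_le, hw_pos⟩ := hQ.exists_mobius_coe_eq hθ hq hbelow
  refine ⟨w, ?_, hw_le, fun hy_pos => hw_pos (mul_pos (sq_pos_of_ne_zero hκ) hy_pos)⟩
  rw [orbit, hy, mobius_Dmat_coe hκ, hw]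

theorem exists_orbit_eq_pos_of_windows_le {m T : ℕ} (hθ : θ ∈ Set.Ioo 0 1)
    (hq : 1 + θ ≤ q * (1 - θ)) (hQ : ∀ n, 1 ≤ n → IsNearRotation θ h (Q n))
    (hκ : ∀ n, 1 ≤ n → κ n ≠ 0)
    (hin : regI (orbit Q (fun n => Dmat (κ n)) x0 m))
    (hout : ¬ regI (orbit Q (fun n => Dmat (κ n)) x0 (m + 1)))
    (hwindows : ∀ s t, m < s → s < t → t ≤ T → h ^ 2 * ∏ i ∈ Finset.Ioc s t, q * κ i ^ 2 ≤ 1)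
    {n : ℕ} (hmn : m + 1 ≤ n) (hnT : n ≤ T) :
    ∃ y : ℝ, 0 < y ∧ orbit Q (fun n => Dmat (κ n)) x0 n = y ∧
      ∃ s, m < s ∧ s ≤ n ∧ y ≤ q * h * ∏ i ∈ Finset.Ioc s n, q * κ i ^ 2 := by
  have hh : 0 ≤ h := (hQ 1 le_rfl).height_nonneg hθ.1
  have hq_pos : 0 < q := pos_of_mul_pos_left (by linarith [hθ.1]) (sub_pos.mpr hθ.2).le
  induction n, hmn using Nat.le_induction with
  | base =>
    obtain ⟨r, hr, hr_nonpos⟩ := hin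
    have hz : κ (m + 1) ^ 2 * r ≤ 0 := mul_nonpos_of_nonneg_of_nonpos (sq_nonneg _) hr_nonpos
    obtain ⟨w, hw, hw_le, -⟩ := exists_orbit_succ_eq_coe hθ hq (hQ _ (by omega))
      (hκ _ (by omega)) hr ((mul_nonpos_of_nonneg_of_nonpos hh hz).trans zero_le_one)
    rw [max_eq_right (hz.trans hh)] at hw_le
    exact ⟨w, not_regI_coe_iff.mp (hw ▸ hout), hw, m + 1, by omega, le_rfl, by simpa using hw_le⟩
  | succ n hmn ih =>
    obtain ⟨y, hy_pos, hy, s, hms, hsn, hy_le⟩ := ih (by omega)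
    have hbelow : h * (κ (n + 1) ^ 2 * y) ≤ 1 :=
      calc h * (κ (n + 1) ^ 2 * y)
          ≤ h * (κ (n + 1) ^ 2 * (q * h * ∏ i ∈ Finset.Ioc s n, q * κ i ^ 2)) := by gcongr
        _ = h ^ 2 * ∏ i ∈ Finset.Ioc s (n + 1), q * κ i ^ 2 := by
          rw [Finset.prod_Ioc_succ_top hsn]; ring
        _ ≤ 1 := hwindows s (n + 1) hms (by omega) hnT
    obtain ⟨w, hw, hw_le, hw_pos⟩ := exists_orbit_succ_eq_coe hθ hq (hQ _ (by omega))
      (hκ _ (by omega)) hy hbelow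
    refine ⟨w, hw_pos hy_pos, hw, ?_⟩
    rcases le_total (κ (n + 1) ^ 2 * y) h with hreset | hgrow
    · rw [max_eq_right hreset] at hw_le
      exact ⟨n + 1, by omega, le_rfl, by simpa using hw_le⟩
    · rw [max_eq_left hgrow] at hw_le
      refine ⟨s, hms, by omega, ?_⟩
      calc w ≤ q * (κ (n + 1) ^ 2 * y) := hw_le
        _ ≤ q * (κ (n + 1) ^ 2 * (q * h * ∏ i ∈ Finset.Ioc s n, q * κ i ^ 2)) := by gcongr
        _ = q * h * ∏ i ∈ Finset.Ioc s (n + 1), q * κ i ^ 2 := by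
          rw [Finset.prod_Ioc_succ_top hsn]; ring

theorem exists_lt_and_not_succ {P : ℕ → Prop} {M : ℕ} (h0 : P 0) (hM : ¬ P M) :
    ∃ m < M, P m ∧ ¬ P (m + 1) := by
  induction M with
  | zero => exact absurd h0 hM
  | succ M ih =>
    by_cases hPM : P M
    · exact ⟨M, M.lt_succ_self, hPM, hM⟩
    · obtain ⟨m, hm, hstep⟩ := ih hPM
      exact ⟨m, hm.trans M.lt_succ_self, hstep⟩

theorem exists_one_lt_sq_mul_prod_of_exit_of_return {M₁ M₂ : ℕ} (hθ : θ ∈ Set.Ioo 0 1)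
    (hq : 1 + θ ≤ q * (1 - θ)) (hQ : ∀ n, 1 ≤ n → IsNearRotation θ h (Q n))
    (hκ : ∀ n, 1 ≤ n → κ n ≠ 0) (hx0 : regI x0) (hM : M₁ < M₂)
    (hexit : ¬ regI (orbit Q (fun n => Dmat (κ n)) x0 M₁))
    (hreturn : regI (orbit Q (fun n => Dmat (κ n)) x0 M₂)) :
    ∃ s t, 0 < s ∧ s < t ∧ t ≤ M₂ ∧ 1 < h ^ 2 * ∏ i ∈ Finset.Ioc s t, q * κ i ^ 2 := by
  obtain ⟨m, hmM, hin, hout⟩ :=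
    exists_lt_and_not_succ (P := fun n => regI (orbit Q (fun n => Dmat (κ n)) x0 n)) hx0 hexit
  by_contra! hwindows
  obtain ⟨y, hy_pos, hy, -⟩ := exists_orbit_eq_pos_of_windows_le hθ hq hQ hκ hin hout
    (fun s t hms => hwindows s t (by omega)) (by omega) (le_refl M₂)
  exact not_regI_coe_iff.mpr hy_pos (hy ▸ hreturn)

end Orbit

section Windows

variable {ι : Type*} {E q c : ℝ} {L s t : ℕ}

theorem prod_le_pow_card_of_mem_Icc {S : Finset ι} {g : ι → ℝ}
    (hg : ∀ i ∈ S, g i ∈ Set.Icc 0 E) : ∏ i ∈ S, g i ≤ E ^ S.card :=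
  (Finset.prod_le_prod (fun i hi => (hg i hi).1) fun i hi => (hg i hi).2).trans_eq
    (Finset.prod_const E)

theorem prod_Ioc_le_sq_mul_prod_Icc {g : ℕ → ℝ} (hE : 1 ≤ E)
    (hg : ∀ i ∈ Finset.Ioc s t, g i ∈ Set.Icc 0 E) :
    ∏ i ∈ Finset.Ioc s t, g i ≤ E ^ 2 * ∏ i ∈ Finset.Icc (s + 2) (t - 1), g i := by
  have hsub : Finset.Icc (s + 2) (t - 1) ⊆ Finset.Ioc s t := fun i => by
    simp only [Finset.mem_Icc, Finset.mem_Ioc]; omega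
  have hends : Finset.Ioc s t \ Finset.Icc (s + 2) (t - 1) ⊆ {s + 1, t} := fun i => by
    simp only [Finset.mem_sdiff, Finset.mem_Icc, Finset.mem_Ioc, Finset.mem_insert,
      Finset.mem_singleton]; omega
  rw [← Finset.prod_sdiff hsub]
  gcongr
  · exact Finset.prod_nonneg fun i hi => (hg i (hsub hi)).1
  · exact (prod_le_pow_card_of_mem_Icc fun i hi => hg i (Finset.sdiff_subset hi)).trans
      (pow_le_pow_right₀ hE ((Finset.card_le_card hends).trans Finset.card_le_two))

theorem pow_lt_mul_prod_Icc_of_one_lt_mul_prod_Ioc {g : ℕ → ℝ} (hE : 1 ≤ E) (hq : 1 ≤ q)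
    (hc : 0 ≤ c) (hcE : c * E ^ (L + 2) ≤ 1) (hg : ∀ i ∈ Finset.Ioc s t, g i ∈ Set.Icc 0 E)
    (hprod : 1 < c * ∏ i ∈ Finset.Ioc s t, g i) :
    s + 2 ≤ t - 1 ∧ q ^ L < c * E ^ 2 * ∏ i ∈ Finset.Icc (s + 2) (t - 1), q * g i := by
  set W := ∏ i ∈ Finset.Icc (s + 2) (t - 1), g i with hW
  have hg' : ∀ i ∈ Finset.Icc (s + 2) (t - 1), g i ∈ Set.Icc 0 E := fun i hi =>
    hg i (by simp only [Finset.mem_Icc, Finset.mem_Ioc] at hi ⊢; omega)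
  have hinner : 1 < c * E ^ 2 * W := by
    rw [mul_assoc]
    exact hprod.trans_le (mul_le_mul_of_nonneg_left (prod_Ioc_le_sq_mul_prod_Icc hE hg) hc)
  have hW_gt : E ^ L < W := by
    refine lt_of_mul_lt_mul_left (a := c * E ^ 2) ?_ (by positivity)
    calc c * E ^ 2 * E ^ L = c * E ^ (L + 2) := by ring
      _ ≤ 1 := hcE
      _ < c * E ^ 2 * W := hinner
  have hcard : L < (Finset.Icc (s + 2) (t - 1)).card :=
    (pow_right_mono₀ hE).reflect_lt (hW_gt.trans_le (prod_le_pow_card_of_mem_Icc hg'))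
  refine ⟨Finset.nonempty_Icc.mp (Finset.card_pos.mp (by omega)), ?_⟩
  rw [Finset.prod_mul_distrib, Finset.prod_const, ← hW]
  calc q ^ L ≤ q ^ (Finset.Icc (s + 2) (t - 1)).card := pow_le_pow_right₀ hq hcard.le
    _ < q ^ (Finset.Icc (s + 2) (t - 1)).card * (c * E ^ 2 * W) :=
      lt_mul_of_one_lt_right (by positivity) hinner
    _ = _ := by ring

end Windows

theorem exists_mem_Ioo_one_add_le_mul_one_sub {q : ℝ} (hq : 1 < q) :
    ∃ θ ∈ Set.Ioo (0 : ℝ) 1, 1 + θ ≤ q * (1 - θ) := by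
  have hq' : 0 < q + 1 := by linarith
  refine ⟨(q - 1) / (q + 1), ⟨div_pos (by linarith) hq', (div_lt_one hq').mpr (by linarith)⟩,
    le_of_eq ?_⟩
  field_simp
  ring

theorem rotation_forces_large_window_product_general
    {k C1 : ℝ} (C2 C3 C4 A : ℝ) (hk : 1 < k) (hC1 : 0 < C1) :
    ∀ᶠ ε in 𝓝[>] (0 : ℝ), ∀ a b α β γ δ κ : ℕ → ℝ,
      (∀ n : ℕ, 1 ≤ n →
        C1 ≤ a n - |b n| ∧ a n + |b n| ≤ C2 ∧
        |α n| ≤ C3 ∧ |β n| ≤ C3 ∧ |γ n| ≤ C3 ∧ |δ n| ≤ C3 ∧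
        0 < κ n ∧ κ n ≤ C4) →
      ∀ (x0 : OnePoint ℝ) (M₁ M₂ : ℕ),
        regI x0 → M₁ < M₂ →
        ¬ regI (orbit (fun n => Qmat ε (a n) (b n) (α n) (β n) (γ n) (δ n))
            (fun n => Dmat (κ n)) x0 M₁) →
        regI (orbit (fun n => Qmat ε (a n) (b n) (α n) (β n) (γ n) (δ n))
            (fun n => Dmat (κ n)) x0 M₂) →
        ∃ N₁ N₂ : ℕ, 2 < N₁ ∧ N₁ ≤ N₂ ∧ N₂ < M₂ ∧
          A / ε ^ 2 < ∏ n ∈ Finset.Icc N₁ N₂, k * κ n ^ 2 := by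
  obtain ⟨q, hq, rfl⟩ : ∃ q, 1 < q ∧ q * q = k :=
    ⟨√k, Real.lt_sqrt_of_sq_lt (by simpa using hk), Real.mul_self_sqrt (by linarith)⟩
  obtain ⟨θ, hθ, hqθ⟩ := exists_mem_Ioo_one_add_le_mul_one_sub hq
  set R := 4 * C2 / θ
  set E := q * C4 ^ 2 + 1
  have hE : 1 ≤ E := le_add_of_nonneg_left (by positivity)
  obtain ⟨L, hL⟩ := pow_unbounded_of_one_lt (A * (R * E) ^ 2) hq
  have hsmall : ∀ᶠ ε in 𝓝[>] (0 : ℝ), (R * ε) ^ 2 * E ^ (L + 2) < 1 :=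
    nhdsWithin_le_nhds <|
      (by fun_prop : Continuous fun ε : ℝ => (R * ε) ^ 2 * E ^ (L + 2)).continuousAt.eventually_lt
        continuousAt_const (by simp)
  filter_upwards [self_mem_nhdsWithin, hsmall, eventually_isNearRotation_Qmat C2 C3 hC1 hθ.1]
    with ε (hε : 0 < ε) hε_small hrot a b α β γ δ κ hdata x0 M₁ M₂ hx0 hM hexit hreturn
  have hQ (n : ℕ) (hn : 1 ≤ n) :
      IsNearRotation θ (R * ε) (Qmat ε (a n) (b n) (α n) (β n) (γ n) (δ n)) := by
    obtain ⟨hab_ge, hab_le, hα, hβ, hγ, hδ, -⟩ := hdata n hn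
    exact hrot _ _ _ _ _ _ hab_ge hab_le hα hβ hγ hδ
  have hκ (n : ℕ) (hn : 1 ≤ n) : κ n ∈ Set.Ioc 0 C4 := (hdata n hn).2.2.2.2.2.2
  obtain ⟨s, t, hs, hst, ht, hprod⟩ := exists_one_lt_sq_mul_prod_of_exit_of_return hθ hqθ hQ
    (fun n hn => (hκ n hn).1.ne') hx0 hM hexit hreturn
  have hfactor (i : ℕ) (hi : i ∈ Finset.Ioc s t) : q * κ i ^ 2 ∈ Set.Icc 0 E := by
    have hi' := hκ i (by have := Finset.mem_Ioc.mp hi; omega)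
    have hsq : κ i ^ 2 ≤ C4 ^ 2 := pow_le_pow_left₀ hi'.1.le hi'.2 2
    exact ⟨by positivity, (mul_le_mul_of_nonneg_left hsq (by linarith)).trans (by simp [E])⟩
  obtain ⟨hne, hlarge⟩ := pow_lt_mul_prod_Icc_of_one_lt_mul_prod_Ioc hE hq.le (sq_nonneg _)
    hε_small.le hfactor hprod
  refine ⟨s + 2, t - 1, by omega, hne, by omega, (div_lt_iff₀ (by positivity)).mpr ?_⟩
  simp only [mul_assoc q q]
  refine lt_of_mul_lt_mul_right (a := (R * E) ^ 2) ?_ (sq_nonneg _)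
  calc A * (R * E) ^ 2 < q ^ L := hL
    _ < (R * ε) ^ 2 * E ^ 2 * ∏ i ∈ Finset.Icc (s + 2) (t - 1), q * (q * κ i ^ 2) := hlarge
    _ = _ := by ring

end

/-- There is `ε₀ ∈ (0,1)`, depending only on `k, C1, C2, C3, C4`, such that for
all `ε ∈ (0,ε₀]`: if the orbit starts in `𝔯_I`, leaves it at some time `M₁` and returns at a
later time `M₂ ≤ N`, then some window product `∏_{n=N₁}^{N₂} kκ_n²` with `2 < N₁ ≤ N₂ < N`
exceeds `(2C4²K²ε²)⁻¹`, where `K = 2C2(1−k⁻¹)⁻¹`. -/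
theorem rotation_forces_large_window_product
    (k C1 C2 C3 C4 : ℝ) (hk : 1 < k) (hC1 : 0 < C1) (hC12 : C1 ≤ C2) (hC4 : 0 < C4) :
    ∃ ε₀ : ℝ, ε₀ ∈ Set.Ioo (0 : ℝ) 1 ∧
      ∀ ε ∈ Set.Ioc (0 : ℝ) ε₀, ∀ a b α β γ δ κ : ℕ → ℝ,
        (∀ n : ℕ, 1 ≤ n →
          C1 ≤ a n - |b n| ∧ a n + |b n| ≤ C2 ∧
          |α n| ≤ C3 ∧ |β n| ≤ C3 ∧ |γ n| ≤ C3 ∧ |δ n| ≤ C3 ∧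
          0 < κ n ∧ κ n ≤ C4) →
        ∀ x0 : OnePoint ℝ, ∀ N M₁ M₂ : ℕ,
          regI x0 → 0 < M₁ → M₁ < M₂ → M₂ ≤ N →
          ¬ regI (orbit (fun n => Qmat ε (a n) (b n) (α n) (β n) (γ n) (δ n))
              (fun n => Dmat (κ n)) x0 M₁) →
          regI (orbit (fun n => Qmat ε (a n) (b n) (α n) (β n) (γ n) (δ n))
              (fun n => Dmat (κ n)) x0 M₂) →
          ∃ N₁ N₂ : ℕ, 2 < N₁ ∧ N₁ ≤ N₂ ∧ N₂ < N ∧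
            (2 * C4 ^ 2 * (2 * C2 * (1 - k⁻¹)⁻¹) ^ 2 * ε ^ 2)⁻¹ <
              ∏ n ∈ Finset.Icc N₁ N₂, k * κ n ^ 2 := by
  have heventually := rotation_forces_large_window_product_general C2 C3 C4
    (2 * C4 ^ 2 * (2 * C2 * (1 - k⁻¹)⁻¹) ^ 2)⁻¹ hk hC1
  obtain ⟨u, hu, hsub⟩ := mem_nhdsGT_iff_exists_Ioc_subset.mp heventually
  refine ⟨min u (1 / 2), ⟨lt_min hu (by norm_num), min_lt_of_right_lt (by norm_num)⟩,
    fun ε hε a b α β γ δ κ hdata x0 N M₁ M₂ hx0 _ hM hMN hexit hreturn => ?_⟩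
  obtain ⟨N₁, N₂, hN₁, hN, hN₂, hlt⟩ := hsub ⟨hε.1, hε.2.trans (min_le_left _ _)⟩
    a b α β γ δ κ hdata x0 M₁ M₂ hx0 hM hexit hreturn
  exact ⟨N₁, N₂, hN₁, hN, hN₂.trans_le hMN, by rwa [mul_inv, ← div_eq_mul_inv]⟩
end
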